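/- arXiv:2512.11379 — 2 statements merged into one kernel-verified Lean document; each statement's English description precedes it below -/
import Mathlib

section
/- For each γ ∈ H there exist unique coefficients c_2, …, c_{(p−1)/2} ∈ K such that γ(x, y) = Σ_{a=2}^{(p−1)/2} c_a·ϑ_a(x, y) for all x, y ∈ O. -/
set_option synthInstance.maxHeartbeats 1000000
set_option maxHeartbeats 1000000

namespace MaximalClassFrame

variable (p : ℕ) [Fact p.Prime]
variable (K : Type) [Field K] [Algebra ℚ_[p] K] [Algebra ℤ_[p] K]
  [IsScalarTower ℤ_[p] ℚ_[p] K]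

/-- The maximal order `𝒪` of `K`: the integral closure of `ℤ_p` in `K`. -/
noncomputable abbrev 𝒪 : Subalgebra ℤ_[p] K := integralClosure ℤ_[p] K

variable (θ : 𝒪 p K)

/-- The maximal ideal `𝔭` of `𝒪`, generated by `κ = θ - 1`. -/
noncomputable def pid : Ideal (𝒪 p K) := Ideal.span {θ - 1}

/-- A `ℤ_p`-bilinear map `γ : 𝒪 × 𝒪 → 𝒪` is `P`-equivariant if it is
alternating and satisfies `γ(θx, θy) = θ·γ(x,y)` for all `x, y`. -/
def IsPEquivariant (γ : 𝒪 p K →ₗ[ℤ_[p]] 𝒪 p K →ₗ[ℤ_[p]] 𝒪 p K) : Prop :=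
  (∀ x, γ x x = 0) ∧ ∀ x y, γ (θ * x) (θ * y) = θ * γ x y

/-- `γ ∈ Ĥ_i`: the additive subgroup of `𝒪` generated by
`{γ(x,y) : x, y ∈ 𝔭^i}` equals `𝔭^(2i+1)`. -/
def InHhat (i : ℕ) (γ : 𝒪 p K →ₗ[ℤ_[p]] 𝒪 p K →ₗ[ℤ_[p]] 𝒪 p K) : Prop :=
  Submodule.span ℤ (Set.image2 (fun x y => γ x y)
      ((pid p K θ ^ i : Ideal (𝒪 p K)) : Set (𝒪 p K))
      ((pid p K θ ^ i : Ideal (𝒪 p K)) : Set (𝒪 p K)))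
    = (pid p K θ ^ (2 * i + 1)).restrictScalars ℤ

variable (σ : ℤ → (K →ₐ[ℚ_[p]] K))

/-- The map `ϑ_a(x,y) = σ_a(x)·σ_{1-a}(y) − σ_{1-a}(x)·σ_a(y)` on `K × K`. -/
noncomputable def thetaMap (a : ℤ) : K → K → K :=
  fun x y => σ a x * σ (1 - a) y - σ (1 - a) x * σ a y

/-!
A bilinear map `γ` with `γ(θx, θy) = θ γ(x, y)` is determined by the function
`f(n) = γ(1, θ^n)` on `ℤ/p`, because the powers of `θ` span `K`. The form `ϑ_a` corresponds to the
difference of characters `θ^((1-a)n) - θ^(an)`, so that the theorem concerns the Fourier expansion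
of `f`. That `γ` is alternating and equivariant gives `f(-n) = -θ^(-n) f(n)`, so the coefficients
are antisymmetric under `b ↦ 1 - b`; those at the exchanged points `0` and `1` vanish because
`∑ θ^n = 0`, and the one at the fixed point `1/2` because `f(0) = 0`. The remaining residues fall
into pairs `{a, 1 - a}` with `2 ≤ a ≤ (p - 1)/2`, and orthogonality of characters gives uniqueness.
-/

section Pairing

open Finset

theorem sum_zmod_eq_sum_range {M : Type*} [AddCommMonoid M] {q : ℕ} [NeZero q] (g : ZMod q → M) :
    ∑ b, g b = ∑ i ∈ range q, g i :=
  sum_bij' (fun b _ => b.val) (fun i _ => (i : ZMod q)) (fun b _ => mem_range.2 b.val_lt)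
    (by simp) (by simp) (fun _ hi => ZMod.val_cast_of_lt (mem_range.1 hi)) (by simp)

theorem sum_zmod_eq_sum_Icc_add_one_sub {M : Type*} [AddCommMonoid M] {q m : ℕ} [NeZero q]
    (hm : 1 ≤ m) (hq : q = 2 * m + 1) (g : ZMod q → M) :
    ∑ b, g b = g 0 + g 1 + g (m + 1) + ∑ a ∈ Icc 2 m, (g a + g (1 - a)) := by
  obtain ⟨k, rfl⟩ := Nat.exists_eq_add_of_le' hm
  have hrange : ∑ i ∈ range q, g i =
      ∑ i ∈ range (k + 2), g i + ∑ i ∈ range (k + 1), g ((k + 2 + i : ℕ)) := by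
    rw [← sum_range_add (fun i => g i)]
    exact congrArg (fun n => ∑ i ∈ range n, g i) (by omega)
  have hlow : ∑ i ∈ range (k + 2), g i = g 0 + g 1 + ∑ i ∈ range k, g ((2 + i : ℕ)) := by
    rw [add_comm k 2, sum_range_add]
    simp [sum_range_succ]
  have hreflect : ∀ i < k, ((k + 2 + (k - 1 - i + 1) : ℕ) : ZMod q) = 1 - (2 + i : ℕ) :=
    fun i hi => by
      have h := congrArg (Nat.cast (R := ZMod q))
        (show k + 2 + (k - 1 - i + 1) + (2 + i) = q + 1 by omega)
      rw [Nat.cast_add, Nat.cast_add q, ZMod.natCast_self, zero_add, Nat.cast_one] at h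
      exact eq_sub_of_add_eq h
  have hhigh : ∑ i ∈ range (k + 1), g ((k + 2 + i : ℕ)) =
      ∑ i ∈ range k, g (1 - (2 + i : ℕ)) + g ((k + 1 : ℕ) + 1) := by
    rw [sum_range_succ', ← sum_range_reflect]
    congr 1
    · exact sum_congr rfl fun i hi => congrArg g (hreflect i (mem_range.1 hi))
    · push_cast
      ring_nf
  rw [sum_zmod_eq_sum_range, hrange, hlow, hhigh, ← Ico_add_one_right_eq_Icc,
    sum_Ico_eq_sum_range, show k + 1 + 1 - 2 = k by omega, sum_add_distrib]
  abel

theorem not_natCast_dvd_and_not_dvd_one_sub {q a : ℕ} (ha : 2 ≤ a) (haq : a < q) :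
    ¬ (q : ℤ) ∣ a ∧ ¬ (q : ℤ) ∣ 1 - a := by
  refine ⟨fun h => ?_, fun h => ?_⟩
  · have := Int.le_of_dvd (by omega) h
    omega
  · have := Int.le_of_dvd (by omega) (dvd_sub_comm.1 h)
    omega

theorem natCast_ne_of_ne_of_lt {q a b : ℕ} (hab : a ≠ b) (ha : a < q) (hb : b < q) :
    (a : ZMod q) ≠ b := fun h =>
  hab (((ZMod.natCast_eq_natCast_iff a b q).1 h).eq_of_lt_of_lt ha hb)

end Pairing

section Fourier

open Finset

variable {R L : Type*} [CommRing R] [Fintype R] [Field L]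

/-- The Fourier coefficient of a function `f : R → L` at `b` with respect to the characters
`n ↦ ψ (b * n)`, normalised by `1 / |R|` so that the inversion formula carries no factor; it is
bundled as a linear form in `f`. -/
noncomputable def fourierCoeff (ψ : AddChar R L) (b : R) : (R → L) →ₗ[L] L :=
  (Fintype.card R : L)⁻¹ • Fintype.linearCombination L (fun k => ψ (-(b * k)))

theorem fourierCoeff_apply (ψ : AddChar R L) (b : R) (f : R → L) :
    fourierCoeff ψ b f = (Fintype.card R : L)⁻¹ * ∑ k, f k * ψ (-(b * k)) := by
  simp only [fourierCoeff, LinearMap.smul_apply, Fintype.linearCombination_apply, smul_eq_mul]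

theorem fourierCoeff_zero_left (ψ : AddChar R L) {f : R → L} (hf : ∑ n, f n = 0) :
    fourierCoeff ψ 0 f = 0 := by
  simp [fourierCoeff_apply, hf]

theorem fourierCoeff_mulShift [DecidableEq R] {ψ : AddChar R L} (hψ : ψ.IsPrimitive)
    (hcard : (Fintype.card R : L) ≠ 0) (a b : R) :
    fourierCoeff ψ b (fun n => ψ (a * n)) = if a = b then 1 else 0 := by
  have hsum : ∑ k, ψ (a * k) * ψ (-(b * k)) = ∑ k, ψ (k * (a - b)) :=
    sum_congr rfl fun k _ => by
      rw [← AddChar.map_add_eq_mul]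
      congr 1
      ring
  rw [fourierCoeff_apply, hsum, AddChar.sum_mulShift _ hψ]
  simp only [sub_eq_zero]
  split_ifs <;> simp [hcard]

theorem sum_fourierCoeff_mul {ψ : AddChar R L} (hψ : ψ.IsPrimitive)
    (hcard : (Fintype.card R : L) ≠ 0) (f : R → L) (n : R) :
    ∑ b, fourierCoeff ψ b f * ψ (b * n) = f n := by
  classical
  have hterm : ∀ b, fourierCoeff ψ b f * ψ (b * n) =
      ∑ k, (Fintype.card R : L)⁻¹ * f k * ψ (b * (n - k)) := fun b => by
    rw [fourierCoeff_apply, mul_sum, sum_mul]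
    refine sum_congr rfl fun k _ => ?_
    rw [mul_sub, sub_eq_neg_add, AddChar.map_add_eq_mul]
    ring
  simp_rw [hterm]
  rw [sum_comm]
  simp_rw [← mul_sum, AddChar.sum_mulShift _ hψ, sub_eq_zero, Nat.cast_ite, Nat.cast_zero,
    mul_ite, mul_zero, sum_ite_eq, mem_univ, if_true]
  field_simp

theorem fourierCoeff_one_sub {ψ : AddChar R L} {f : R → L}
    (hf : ∀ n, f (-n) = -(ψ (-n) * f n)) (b : R) :
    fourierCoeff ψ (1 - b) f = -fourierCoeff ψ b f := by
  rw [fourierCoeff_apply, fourierCoeff_apply, ← mul_neg, ← sum_neg_distrib,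
    ← Equiv.sum_comp (Equiv.neg R)]
  congr 1
  refine sum_congr rfl fun k _ => ?_
  have hk : ψ (-k) * ψ k = 1 := by
    rw [← AddChar.map_add_eq_mul, neg_add_cancel, AddChar.map_zero_eq_one]
  rw [Equiv.neg_apply, hf, show -((1 - b) * -k) = k + -(b * k) by ring, AddChar.map_add_eq_mul]
  linear_combination (-(f k * ψ (-(b * k)))) * hk

end Fourier

section Reflection

open Finset

variable {L : Type*} [Field L] {q m : ℕ} [NeZero q] {ψ : AddChar (ZMod q) L} {f : ZMod q → L}

theorem eq_sum_neg_fourierCoeff_mul_of_reflection (hm : 1 ≤ m) (hq : q = 2 * m + 1)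
    (hψ : ψ.IsPrimitive) (hqL : (q : L) ≠ 0) (h0 : f 0 = 0) (hsum : ∑ n, f n = 0)
    (hneg : ∀ n, f (-n) = -(ψ (-n) * f n)) (n : ZMod q) :
    f n = ∑ a ∈ Icc 2 m, -fourierCoeff ψ a f * (ψ ((1 - a) * n) - ψ (a * n)) := by
  have hcard : (Fintype.card (ZMod q) : L) ≠ 0 := by rwa [ZMod.card]
  have hone_sub := fourierCoeff_one_sub hneg
  have hcoeff0 : fourierCoeff ψ 0 f = 0 := fourierCoeff_zero_left ψ hsum
  have hcoeff1 : fourierCoeff ψ 1 f = 0 := by simpa [hcoeff0] using hone_sub 0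
  -- `m + 1 = 1 / 2` is the fixed point of `b ↦ 1 - b`; evaluating the inversion formula at `0`
  -- kills its coefficient even in characteristic two.
  have hcoeff_mid : fourierCoeff ψ (m + 1 : ZMod q) f = 0 := by
    have hinv := sum_fourierCoeff_mul hψ hcard f 0
    rw [sum_zmod_eq_sum_Icc_add_one_sub hm hq] at hinv
    simpa [hcoeff0, hcoeff1, hone_sub, h0] using hinv
  rw [← sum_fourierCoeff_mul hψ hcard f n, sum_zmod_eq_sum_Icc_add_one_sub hm hq, hcoeff0, hcoeff1,
    hcoeff_mid, zero_mul, zero_mul, zero_mul, zero_add, zero_add, zero_add]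
  refine sum_congr rfl fun a _ => ?_
  rw [hone_sub]
  ring

theorem fourierCoeff_natCast_of_eq_sum (hq : q = 2 * m + 1) (hψ : ψ.IsPrimitive)
    (hqL : (q : L) ≠ 0) {c : ℕ → L}
    (hf : ∀ n, f n = ∑ a ∈ Icc 2 m, c a * (ψ ((1 - a) * n) - ψ (a * n))) {b : ℕ}
    (hb : b ∈ Icc 2 m) : fourierCoeff ψ b f = -c b := by
  have hcard : (Fintype.card (ZMod q) : L) ≠ 0 := by rwa [ZMod.card]
  have hf' : f = ∑ a ∈ Icc 2 m,
      c a • ((fun n => ψ ((1 - a : ZMod q) * n)) - fun n => ψ ((a : ZMod q) * n)) := by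
    funext n
    simp [hf, Finset.sum_apply]
  rw [mem_Icc] at hb
  have hone_sub_ne : ∀ a ∈ Icc 2 m, (1 - a : ZMod q) ≠ b := fun a ha h => by
    rw [mem_Icc] at ha
    refine natCast_ne_of_ne_of_lt (q := q) (a := a + b) (b := 1) (by omega) (by omega) (by omega) ?_
    push_cast
    linear_combination -h
  have hterm : ∀ a ∈ Icc 2 m, c a * (0 - if (a : ZMod q) = b then 1 else 0) =
      if a = b then -c a else 0 := fun a ha => by
    rw [mem_Icc] at ha
    by_cases hab : a = b
    · simp [hab]
    · simp [hab, natCast_ne_of_ne_of_lt (q := q) hab (by omega) (by omega)]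
  rw [hf', map_sum]
  simp only [map_smul, map_sub, fourierCoeff_mulShift hψ hcard, smul_eq_mul]
  rw [sum_congr rfl fun a ha => by rw [if_neg (hone_sub_ne a ha), hterm a ha], sum_ite_eq',
    if_pos (mem_Icc.2 hb)]

theorem existsUnique_coeff_of_reflection (hm : 1 ≤ m) (hq : q = 2 * m + 1)
    (hψ : ψ.IsPrimitive) (hqL : (q : L) ≠ 0) (h0 : f 0 = 0) (hsum : ∑ n, f n = 0)
    (hneg : ∀ n, f (-n) = -(ψ (-n) * f n)) :
    ∃! c : ℕ → L, (∀ a, a ∉ Icc 2 m → c a = 0) ∧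
      ∀ n, f n = ∑ a ∈ Icc 2 m, c a * (ψ ((1 - a) * n) - ψ (a * n)) := by
  refine ⟨fun a => if a ∈ Icc 2 m then -fourierCoeff ψ a f else 0,
    ⟨fun a ha => if_neg ha, fun n => ?_⟩, fun c ⟨hc, hfc⟩ => funext fun a => ?_⟩
  · rw [eq_sum_neg_fourierCoeff_mul_of_reflection hm hq hψ hqL h0 hsum hneg n]
    exact sum_congr rfl fun a ha => by simp only [if_pos ha]
  · split_ifs with ha
    · rw [fourierCoeff_natCast_of_eq_sum hq hψ hqL hfc ha, neg_neg]
    · exact hc a ha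

end Reflection

section LinearExtension

variable {R : Type*} (F : Type*) {L : Type*} [CommRing R] [CommRing F] [Algebra R F]
  [IsFractionRing R F] [CommRing L] [Algebra F L] [Algebra R L] [IsScalarTower R F L]
  {A : Subalgebra R L} {ζ : A}

theorem exists_smul_eq_aeval (hgen : Algebra.adjoin F {(ζ : L)} = ⊤) (x : A) :
    ∃ (t : nonZeroDivisors R) (P : Polynomial R), t • x = Polynomial.aeval ζ P := by
  obtain ⟨t, ht⟩ := multiple_mem_adjoin_of_mem_localization_adjoin (nonZeroDivisors R) F
    {(ζ : L)} (x : L) (hgen ▸ Algebra.mem_top)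
  rw [Algebra.adjoin_singleton_eq_range_aeval] at ht
  obtain ⟨P, hP⟩ := ht
  exact ⟨t, P, Subtype.ext (hP.symm.trans (Polynomial.aeval_subalgebra_coe P A ζ).symm)⟩

theorem linearMap_ext_pow (hgen : Algebra.adjoin F {(ζ : L)} = ⊤) {M : Type*} [AddCommGroup M]
    [Module F M] [Module R M] [IsScalarTower R F M] {g g' : A →ₗ[R] M}
    (h : ∀ i : ℕ, g (ζ ^ i) = g' (ζ ^ i)) : g = g' := by
  ext x
  obtain ⟨t, P, hx⟩ := exists_smul_eq_aeval F hgen x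
  have ht : algebraMap R F t • g x = algebraMap R F t • g' x := by
    rw [algebraMap_smul, algebraMap_smul, ← map_smul, ← map_smul, ← Submonoid.smul_def, hx,
      Polynomial.aeval_eq_sum_range, map_sum, map_sum]
    exact Finset.sum_congr rfl fun i _ => by rw [map_smul, map_smul, h]
  exact (IsLocalization.map_units F t).smul_left_cancel.1 ht

theorem bilin_ext_pow (hgen : Algebra.adjoin F {(ζ : L)} = ⊤) {B B' : A →ₗ[R] A →ₗ[R] L}
    (h : ∀ i j : ℕ, B (ζ ^ i) (ζ ^ j) = B' (ζ ^ i) (ζ ^ j)) : B = B' :=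
  linearMap_ext_pow F hgen fun i => linearMap_ext_pow F hgen (h i)

end LinearExtension

section RootCharacter

theorem exists_isPrimitive_addChar_apply_one_eq {M : Type*} [CommMonoid M] {q : ℕ} [NeZero q]
    {ζ : M} (hζ : IsPrimitiveRoot ζ q) : ∃ χ : AddChar (ZMod q) M, χ.IsPrimitive ∧ χ 1 = ζ :=
  ⟨_, AddChar.zmodChar_primitive_of_primitive_root q hζ,
    by simpa using AddChar.zmodChar_apply' hζ.pow_eq_one 1⟩

theorem addChar_one_pow {S M : Type*} [Ring S] [Monoid M] (χ : AddChar S M) (i : ℕ) :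
    χ 1 ^ i = χ i := by
  rw [← AddChar.map_nsmul_eq_pow, nsmul_one]

end RootCharacter

section EquivariantForms

variable {R L : Type*} [CommRing R] [CommRing L] [Algebra R L] {A : Subalgebra R L}

/-- The bilinear forms `B : A × A → L` on a subalgebra `A` of `L` that satisfy
`B(ζx, ζy) = ζ B(x, y)`, as an `L`-subspace. With values in `A` and alternating, these are the
`P`-equivariant maps. -/
def equivariantForms (ζ : A) : Submodule L (A →ₗ[R] A →ₗ[R] L) where
  carrier := {B | ∀ x y, B (ζ * x) (ζ * y) = ζ * B x y}
  zero_mem' x y := by simp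
  add_mem' hB hB' x y := by simp [hB x y, hB' x y, mul_add]
  smul_mem' c B hB x y := by simp [hB x y, mul_left_comm]

/-- The alternating form `(x, y) ↦ σ(x) τ(y) - τ(x) σ(y)`; the map `ϑ_a` is the case
`σ = σ_a`, `τ = σ_{1-a}`. -/
noncomputable def thetaForm (σ τ : A →ₐ[R] L) : A →ₗ[R] A →ₗ[R] L :=
  (LinearMap.mul R L).compl₁₂ σ.toLinearMap τ.toLinearMap -
    (LinearMap.mul R L).compl₁₂ τ.toLinearMap σ.toLinearMap

theorem thetaForm_apply (σ τ : A →ₐ[R] L) (x y : A) :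
    thetaForm σ τ x y = σ x * τ y - τ x * σ y :=
  rfl

theorem thetaForm_mem_equivariantForms {ζ : A} {σ τ : A →ₐ[R] L} (h : σ ζ * τ ζ = ζ) :
    thetaForm σ τ ∈ equivariantForms ζ := fun x y => by
  simp only [thetaForm_apply, map_mul]
  linear_combination (σ x * τ y - τ x * σ y) * h

theorem apply_pow_mul_pow_mul {ζ : A} {B : A →ₗ[R] A →ₗ[R] L} (hB : B ∈ equivariantForms ζ)
    (i : ℕ) (x y : A) : B (ζ ^ i * x) (ζ ^ i * y) = ζ ^ i * B x y := by
  induction i with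
  | zero => simp
  | succ i ih => rw [pow_succ', mul_assoc, mul_assoc, hB, ih, pow_succ', mul_assoc]

variable {q : ℕ} [NeZero q] {χ : AddChar (ZMod q) A} {B : A →ₗ[R] A →ₗ[R] L}

theorem apply_addChar_mul_addChar_mul (hB : B ∈ equivariantForms (χ 1)) (k : ZMod q) (x y : A) :
    B (χ k * x) (χ k * y) = χ k * B x y := by
  rw [← ZMod.natCast_zmod_val k, ← addChar_one_pow, apply_pow_mul_pow_mul hB,
    SubmonoidClass.coe_pow]

theorem apply_addChar_addChar_add (hB : B ∈ equivariantForms (χ 1)) (k n : ZMod q) :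
    B (χ k) (χ (k + n)) = χ k * B 1 (χ n) := by
  simpa [AddChar.map_add_eq_mul] using apply_addChar_mul_addChar_mul hB k 1 (χ n)

theorem apply_one_addChar_neg (hB : B ∈ equivariantForms (χ 1)) (halt : B.IsAlt) (n : ZMod q) :
    B 1 (χ (-n)) = -(χ (-n) * B 1 (χ n)) := by
  have h := apply_addChar_addChar_add hB (-n) n
  rw [neg_add_cancel, AddChar.map_zero_eq_one] at h
  rw [← halt.neg, h]

theorem eq_of_apply_one_addChar_eq (F : Type*) [CommRing F] [Algebra R F] [IsFractionRing R F]
    [Algebra F L] [IsScalarTower R F L] (hgen : Algebra.adjoin F {(χ 1 : L)} = ⊤)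
    {B' : A →ₗ[R] A →ₗ[R] L} (hB : B ∈ equivariantForms (χ 1))
    (hB' : B' ∈ equivariantForms (χ 1)) (h : ∀ n, B 1 (χ n) = B' 1 (χ n)) : B = B' := by
  refine bilin_ext_pow F hgen fun i j => ?_
  rw [addChar_one_pow, addChar_one_pow, ← add_sub_cancel (i : ZMod q) j,
    apply_addChar_addChar_add hB, apply_addChar_addChar_add hB', h]

end EquivariantForms

section CharacterValues

variable {R L : Type*} [CommRing R] [Field L] [Algebra R L] {A : Subalgebra R L}
  {q : ℕ} [NeZero q] {χ : AddChar (ZMod q) A} {B : A →ₗ[R] A →ₗ[R] L}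

theorem algHom_addChar {τ : A →ₐ[R] L} {j : ℤ} (hτ : τ (χ 1) = (χ 1 : L) ^ j) (n : ZMod q) :
    τ (χ n) = χ (j * n) := by
  have hj : (χ j : L) = (χ 1 : L) ^ j := by
    simpa using ((A.val : A →* L).compAddChar χ).map_zsmul_eq_zpow j 1
  rw [← ZMod.natCast_zmod_val n, ← addChar_one_pow, map_pow, hτ, ← hj, mul_comm, ← nsmul_eq_mul,
    AddChar.map_nsmul_eq_pow, SubmonoidClass.coe_pow]

theorem sum_apply_one_addChar (hχ : χ ≠ 1) (B : A →ₗ[R] A →ₗ[R] L) : ∑ n, B 1 (χ n) = 0 := by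
  rw [← map_sum, AddChar.sum_eq_zero_of_ne_one hχ, map_zero]

theorem thetaForm_one_addChar {σ τ : A →ₐ[R] L} {a b : ℤ} (hσ : σ (χ 1) = (χ 1 : L) ^ a)
    (hτ : τ (χ 1) = (χ 1 : L) ^ b) (n : ZMod q) :
    thetaForm σ τ 1 (χ n) = χ (b * n) - χ (a * n) := by
  simp [thetaForm_apply, algHom_addChar hσ, algHom_addChar hτ]

theorem eq_sum_smul_thetaForm_iff (F : Type*) [CommRing F] [Algebra R F] [IsFractionRing R F]
    [Algebra F L] [IsScalarTower R F L] (hgen : Algebra.adjoin F {(χ 1 : L)} = ⊤)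
    (hB : B ∈ equivariantForms (χ 1)) {σ : ℤ → A →ₐ[R] L} {s : Finset ℕ}
    (hσ : ∀ a ∈ s, σ a (χ 1) = (χ 1 : L) ^ (a : ℤ))
    (hσ' : ∀ a ∈ s, σ (1 - a) (χ 1) = (χ 1 : L) ^ (1 - a : ℤ)) (c : ℕ → L) :
    B = ∑ a ∈ s, c a • thetaForm (σ a) (σ (1 - a)) ↔
      ∀ n, B 1 (χ n) = ∑ a ∈ s, c a * ((χ ((1 - a) * n) : L) - χ (a * n)) := by
  have hχ0 : (χ 1 : L) ≠ 0 := fun h => (χ.val_isUnit 1).ne_zero (Subtype.ext h)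
  have hmem : ∑ a ∈ s, c a • thetaForm (σ a) (σ (1 - a)) ∈ equivariantForms (χ 1) :=
    Submodule.sum_mem _ fun a ha => Submodule.smul_mem _ _ <| thetaForm_mem_equivariantForms <| by
      rw [hσ a ha, hσ' a ha, ← zpow_add₀ hχ0, add_sub_cancel, zpow_one]
  have hsample : ∀ n, (∑ a ∈ s, c a • thetaForm (σ a) (σ (1 - a))) 1 (χ n) =
      ∑ a ∈ s, c a * ((χ ((1 - a) * n) : L) - χ (a * n)) := fun n => by
    simp only [LinearMap.sum_apply, LinearMap.smul_apply, smul_eq_mul]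
    refine Finset.sum_congr rfl fun a ha => ?_
    rw [thetaForm_one_addChar (hσ a ha) (hσ' a ha)]
    push_cast
    rfl
  simp only [← hsample]
  exact ⟨fun h n => by rw [← h], eq_of_apply_one_addChar_eq F hgen hB hmem⟩

end CharacterValues

theorem frame_theta_basis_general {q : ℕ} {R F L : Type*} [CommRing R] [CommRing F]
    [Algebra R F] [IsFractionRing R F] [Field L] [Algebra F L] [Algebra R L] [IsScalarTower R F L]
    {A : Subalgebra R L} {ζ : A} {σ : ℤ → A →ₐ[R] L} (hq : Odd q) (hq1 : 1 < q)
    (hζ : IsPrimitiveRoot (ζ : L) q) (hgen : Algebra.adjoin F {(ζ : L)} = ⊤)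
    (hσ : ∀ j : ℤ, ¬ ((q : ℤ) ∣ j) → σ j ζ = (ζ : L) ^ j)
    {B : A →ₗ[R] A →ₗ[R] L} (halt : B.IsAlt) (hB : ∀ x y, B (ζ * x) (ζ * y) = ζ * B x y) :
    ∃! c : ℕ → L, (∀ a : ℕ, a ∉ Finset.Icc 2 ((q - 1) / 2) → c a = 0) ∧
      ∀ x y : A, B x y = ∑ a ∈ Finset.Icc 2 ((q - 1) / 2),
        c a * (σ a x * σ (1 - a) y - σ (1 - a) x * σ a y) := by
  have : Fact (1 < q) := ⟨hq1⟩
  have : NeZero q := ⟨by omega⟩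
  obtain ⟨χ, hχ, rfl⟩ := exists_isPrimitive_addChar_apply_one_eq
    (IsPrimitiveRoot.coe_submonoidClass_iff.1 hζ)
  have hodd : q = 2 * ((q - 1) / 2) + 1 := by
    have := Nat.odd_iff.1 hq
    omega
  have hnot_dvd : ∀ a ∈ Finset.Icc 2 ((q - 1) / 2), ¬ (q : ℤ) ∣ a ∧ ¬ (q : ℤ) ∣ 1 - a :=
    fun a ha => by
      rw [Finset.mem_Icc] at ha
      exact not_natCast_dvd_and_not_dvd_one_sub ha.1 (by omega)
  have hiff := eq_sum_smul_thetaForm_iff F hgen hB (σ := σ)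
    (fun a ha => hσ a (hnot_dvd a ha).1) (fun a ha => hσ (1 - a) (hnot_dvd a ha).2)
  simp only [LinearMap.ext_iff₂, LinearMap.sum_apply, LinearMap.smul_apply, smul_eq_mul,
    thetaForm_apply] at hiff
  simp only [hiff]
  have hχ_ne_one : χ ≠ 1 := χ.mulShift_one ▸ hχ one_ne_zero
  exact existsUnique_coeff_of_reflection (ψ := (A.val : A →* L).compAddChar χ) (by omega) hodd
    (hχ.compMulHom_of_isPrimitive Subtype.val_injective) hζ.neZero'.ne
    (by rw [AddChar.map_zero_eq_one, halt]) (sum_apply_one_addChar hχ_ne_one B)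
    (apply_one_addChar_neg hB halt)

/-- Each `γ ∈ H` is a unique linear combination
`γ = Σ_{a=2}^{(p−1)/2} c_a·ϑ_a` with `c_a ∈ K`. -/
theorem frame_theta_basis (hp : 5 ≤ p) (hθ : IsPrimitiveRoot (θ : K) p)
    (hgen : Algebra.adjoin ℚ_[p] {(θ : K)} = ⊤)
    (hσ : ∀ j : ℤ, ¬ ((p : ℤ) ∣ j) → σ j (θ : K) = (θ : K) ^ j)
    (γ : 𝒪 p K →ₗ[ℤ_[p]] 𝒪 p K →ₗ[ℤ_[p]] 𝒪 p K) (hγ : IsPEquivariant p K θ γ) :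
    ∃! c : ℕ → K, (∀ a : ℕ, a ∉ Finset.Icc 2 ((p - 1) / 2) → c a = 0) ∧
      ∀ x y : 𝒪 p K, ((γ x y : 𝒪 p K) : K)
        = ∑ a ∈ Finset.Icc 2 ((p - 1) / 2), c a * thetaMap p K σ (a : ℤ) (x : K) (y : K) := by
  exact frame_theta_basis_general (F := ℚ_[p])
    (σ := fun j => ((σ j).restrictScalars ℤ_[p]).comp (𝒪 p K).val)
    (B := γ.compr₂ (𝒪 p K).val.toLinearMap)
    ((Fact.out : p.Prime).odd_of_ne_two (by omega)) (by omega) hθ hgen hσ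
    (fun x => congrArg Subtype.val (hγ.1 x)) fun x y => congrArg Subtype.val (hγ.2 x y)

end MaximalClassFrame
end

section
/- Let i ∈ ℕ₀ and let γ ∈ Ĥ_i with J_i(γ) ≠ {0}. Write W_3(i) = 𝔭^{w} and J_i(γ) = 𝔭^{λ}. Then w ≤ λ ≤ w + 2p − 8; in particular 𝔭^{w+2p−8} ⊆ J_i(γ) ⊆ W_3(i). -/
set_option synthInstance.maxHeartbeats 1000000
set_option maxHeartbeats 1000000

namespace MaximalClassFrame

variable (p : ℕ) [Fact p.Prime]
variable (K : Type) [Field K] [Algebra ℚ_[p] K] [Algebra ℤ_[p] K]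
  [IsScalarTower ℤ_[p] ℚ_[p] K]

variable (θ : 𝒪 p K)

variable (γ : 𝒪 p K →ₗ[ℤ_[p]] 𝒪 p K →ₗ[ℤ_[p]] 𝒪 p K)

/-- The ideal `J_i(γ)` of `𝒪` generated by the Jacobi expressions
`γ(γ(x,y),z) + γ(γ(y,z),x) + γ(γ(z,x),y)` for `x, y, z ∈ 𝔭^i`. -/
noncomputable def Jid (i : ℕ) : Ideal (𝒪 p K) :=
  Ideal.span {v : 𝒪 p K | ∃ x ∈ pid p K θ ^ i, ∃ y ∈ pid p K θ ^ i, ∃ z ∈ pid p K θ ^ i,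
    v = γ (γ x y) z + γ (γ y z) x + γ (γ z x) y}

/-- The ideals `W_k(i)`:  `W_1(i) = 𝔭^i` and `W_{k+1}(i)` is the ideal
generated by `{γ(x,y) : x ∈ W_k(i), y ∈ 𝔭^i}`. -/
noncomputable def Wid (i : ℕ) : ℕ → Ideal (𝒪 p K)
  | 0 => ⊤
  | 1 => pid p K θ ^ i
  | (k + 2) => Ideal.span (Set.image2 (fun x y => γ x y)
      ((Wid i (k + 1) : Ideal (𝒪 p K)) : Set (𝒪 p K))
      ((pid p K θ ^ i : Ideal (𝒪 p K)) : Set (𝒪 p K)))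

/-!
Write `σ_a` for the automorphism `θ ↦ θ ^ a` of `K`, with `σ_0 = 0`. An equivariant alternating map
has the form `γ(x, y) = ∑ c_t σ_t(x) σ_{1-t}(y)`, and its Jacobi expression is
`∑ J(a, b, d) σ_a(x) σ_b(y) σ_d(z)` over `a + b + d = 1`, where `J` is the Jacobi expression of the
`ℤ/p`-graded bracket `[e_a, e_b] = σ_{a+b}(c_{a/(a+b)}) e_{a+b}` with `e_0 = 0`. Let `M` be the
maximum of the `‖c_t‖`. If all `‖J(a, b, d)‖` were less than `M ^ 2`, then the pairs of degrees with
`‖[e_a, e_b]‖ = M` would be the support of a graded Lie algebra that equals its derived algebra. But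
`e_0 = 0` makes every `ad e_a` nilpotent, and Engel's theorem forbids this. So some `J(a, b, d)` has
norm at least `M ^ 2`.

That term is isolated from the Jacobi expression by replacing `x` with `(θ - θ ^ s) x` for the
unwanted values `s` of `a`, and likewise for `y`. Each replacement costs one factor `κ`, and at most
`2p - 7` are needed, so `‖κ‖ ^ λ ≥ M ^ 2 ‖κ‖ ^ (2p - 7 + 3i)`. On the other hand `γ ∈ Ĥ_i` gives
`M ≥ 1` and `‖κ‖ ^ w ≤ M ‖κ‖ ^ (3i + 1)`.
-/

section Engel

variable {q : ℕ}

/-- The pairs of degrees with `[e_a, e_b] ≠ 0` in a Lie algebra graded by `ℤ/q` whose components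
are spanned by `e_a`, with `e_0 = 0`. -/
structure IsLieSupport (E : ZMod q → ZMod q → Prop) : Prop where
  symm : ∀ {a b}, E a b → E b a
  irrefl : ∀ a, ¬ E a a
  zero : ∀ a, ¬ E 0 a
  add_ne : ∀ {a b}, E a b → a + b ≠ 0
  jacobi : ∀ {s t v}, E s v → E t (s + v) → (E t s ∧ E (t + s) v) ∨ (E t v ∧ E s (t + v))

/-- The span of the degrees in `U` is invariant under the action of the degrees in `S`. -/
def StableUnder (E : ZMod q → ZMod q → Prop) (S U : Set (ZMod q)) : Prop :=
  ∀ s ∈ S, ∀ u ∈ U, E s u → s + u ∈ U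

/-- The conclusion of Engel's theorem for the span of the degrees in `T`: every nonzero graded
subquotient `U / H` contains a nonzero homogeneous element annihilated by `T`. -/
def ActsNilpotently (E : ZMod q → ZMod q → Prop) (T : Set (ZMod q)) : Prop :=
  ∀ U H, StableUnder E T U → StableUnder E T H → ¬ U ⊆ H →
    ∃ v ∈ U \ H, ∀ t ∈ T, E t v → t + v ∈ H

variable {E : ZMod q → ZMod q → Prop} {S T U : Set (ZMod q)} {s : ZMod q}

lemma StableUnder.mono_left (hU : StableUnder E S U) (h : T ⊆ S) : StableUnder E T U :=
  fun t ht => hU t (h ht)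

lemma StableUnder.insert (hE : IsLieSupport E) (hT : StableUnder E T T)
    (hs : ∀ t ∈ T, E t s → t + s ∈ T) : StableUnder E (insert s T) (insert s T) := by
  rintro a (rfl | ha) b (rfl | hb) hab
  · exact (hE.irrefl _ hab).elim
  · exact .inr (add_comm a b ▸ hs b hb (hE.symm hab))
  · exact .inr (hs a ha hab)
  · exact .inr (hT a ha b hb hab)

lemma zero_mem_of_forall_add_mem [Fact q.Prime] (hs : s ≠ 0) (hU : U.Nonempty)
    (h : ∀ u ∈ U, s + u ∈ U) : 0 ∈ U := by
  obtain ⟨u, hu⟩ := hU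
  have hmul : ∀ k : ℕ, k * s + u ∈ U := by
    intro k
    induction k with
    | zero => simpa using hu
    | succ k ih => simpa [add_one_mul, add_assoc, add_comm, add_left_comm] using h _ ih
  simpa [div_mul_cancel₀ _ hs] using hmul (-u / s).val

lemma ActsNilpotently.insert [Fact q.Prime] (hE : IsLieSupport E) (hT : ActsNilpotently E T)
    (hs : ∀ t ∈ T, E t s → t + s ∈ T) : ActsNilpotently E (insert s T) := by
  intro U H hU hH hUH
  set V := {v ∈ U \ H | ∀ t ∈ T, E t v → t + v ∈ H}
  have hV_ne : V.Nonempty :=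
    hT U H (hU.mono_left (Set.subset_insert s T)) (hH.mono_left (Set.subset_insert s T)) hUH
  suffices ∃ v ∈ V, E s v → s + v ∈ H by
    obtain ⟨v, ⟨hv, hTv⟩, hsv⟩ := this
    exact ⟨v, hv, Set.forall_mem_insert.2 ⟨hsv, hTv⟩⟩
  by_contra! hcon
  have hV_add : ∀ v ∈ V, s + v ∈ V := by
    intro v hv
    obtain ⟨hsv, hsvH⟩ := hcon v hv
    refine ⟨⟨hU s (Set.mem_insert s T) v hv.1.1 hsv, hsvH⟩, fun t ht htsv => ?_⟩
    rcases hE.jacobi hsv htsv with ⟨hts, htsv'⟩ | ⟨htv, hstv⟩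
    · simpa only [add_assoc] using hv.2 _ (hs t ht hts) htsv'
    · simpa only [add_left_comm] using hH s (Set.mem_insert s T) _ (hv.2 t ht htv) hstv
  have hs0 : s ≠ 0 := by
    rintro rfl
    obtain ⟨v, hv⟩ := hV_ne
    exact hE.zero v (hcon v hv).1
  exact hE.zero s (hE.symm (hcon 0 (zero_mem_of_forall_add_mem hs0 hV_ne hV_add)).1)

theorem IsLieSupport.actsNilpotently [Fact q.Prime] (hE : IsLieSupport E)
    (hS : StableUnder E S S) : ActsNilpotently E S := by
  obtain ⟨T, ⟨hTS, hT, hTnil⟩, hmax⟩ :=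
    (Set.toFinite {T | T ⊆ S ∧ StableUnder E T T ∧ ActsNilpotently E T}).exists_maximal
      ⟨∅, Set.empty_subset S, by simp [StableUnder], fun U H _ _ hUH => by
        simpa [Set.not_subset] using hUH⟩
  suffices S ⊆ T from hTS.antisymm this ▸ hTnil
  by_contra hST
  obtain ⟨s, ⟨hsS, hsT⟩, hs⟩ := hTnil S T (hS.mono_left hTS) hT hST
  exact hsT (hmax ⟨Set.insert_subset hsS hTS, hT.insert hE hs, hTnil.insert hE hs⟩
    (Set.subset_insert s T) (Set.mem_insert s T))

theorem IsLieSupport.not_perfect [Fact q.Prime] (hE : IsLieSupport E) :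
    ¬ ∀ n : ZMod q, n ≠ 0 → ∃ a b, a + b = n ∧ E a b := by
  intro hperf
  have hS : StableUnder E {0}ᶜ {0}ᶜ := fun a _ b _ => hE.add_ne
  obtain ⟨H, ⟨hHS, hH⟩, hmax⟩ :=
    (Set.toFinite {H | H ⊂ {0}ᶜ ∧ StableUnder E {0}ᶜ H}).exists_maximal
      ⟨∅, Set.empty_ssubset.2 ⟨1, one_ne_zero⟩, by simp [StableUnder]⟩
  obtain ⟨v, ⟨hv0, hvH⟩, hv⟩ := hE.actsNilpotently hS _ H hS hH hHS.not_subset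
  have hvH_eq : insert v H = {0}ᶜ := by
    by_contra hne
    refine hvH (hmax ⟨(Set.insert_subset hv0 hHS.subset).ssubset_of_ne hne, ?_⟩
      (Set.subset_insert v H) (Set.mem_insert v H))
    rintro a ha b (rfl | hb) hab
    exacts [.inr (hv a ha hab), .inr (hH a ha b hb hab)]
  obtain ⟨a, b, hab, hE_ab⟩ := hperf v hv0
  have ha : a ≠ 0 := fun h => hE.zero b (h ▸ hE_ab)
  have hb : b ∈ insert v H := hvH_eq ▸ fun h : b = 0 => hE.zero a (h ▸ hE.symm hE_ab)
  rcases hb with rfl | hb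
  · exact ha (by simpa using hab)
  · exact hvH (hab ▸ hH a ha b hb hE_ab)

end Engel

section JacobiCoefficients

/-- The coefficient of `e_{a+b+d}` in the Jacobi expression of `e_a, e_b, e_d`, where
`[e_a, e_b] = C a b • e_{a+b}`. -/
def jacCoeff {G R : Type*} [Add G] [Semiring R] (C : G → G → R) (a b d : G) : R :=
  C a b * C (a + b) d + C b d * C (b + d) a + C d a * C (d + a) b

/-- The function `C` has the symmetries of the structure constants of an alternating graded
bracket `[e_a, e_b] = C a b • e_{a+b}` with `e_0 = 0`. -/
structure IsAlternatingCoeff {G R : Type*} [AddGroup G] [AddGroup R] (C : G → G → R) : Prop where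
  self : ∀ a, C a a = 0
  swap : ∀ a b, C b a = -C a b
  zero_left : ∀ b, C 0 b = 0
  eq_zero_of_add_eq_zero : ∀ a b, a + b = 0 → C a b = 0

/-- The triples of degrees that can contribute to a Jacobi expression of degree one. -/
structure IsJacobiTriple {G : Type*} [AddMonoidWithOne G] (a b d : G) : Prop where
  sum : a + b + d = 1
  left_ne_zero : a ≠ 0
  mid_ne_zero : b ≠ 0
  right_ne_zero : d ≠ 0
  left_ne_mid : a ≠ b
  mid_ne_right : b ≠ d
  right_ne_left : d ≠ a

section

variable {G R : Type*}

lemma IsJacobiTriple.rotate [AddCommGroupWithOne G] {a b d : G} (h : IsJacobiTriple a b d) :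
    IsJacobiTriple b d a :=
  ⟨by rw [← h.sum]; abel, h.mid_ne_zero, h.right_ne_zero, h.left_ne_zero, h.mid_ne_right,
    h.right_ne_left, h.left_ne_mid⟩

lemma jacCoeff_rotate [Add G] [Semiring R] (C : G → G → R) (a b d : G) :
    jacCoeff C b d a = jacCoeff C a b d := by
  simp only [jacCoeff, add_assoc, add_comm]

variable [AddCommGroup G] [CommRing R] {C : G → G → R}

lemma IsAlternatingCoeff.zero_right (hC : IsAlternatingCoeff C) (b : G) : C b 0 = 0 := by
  rw [hC.swap, hC.zero_left, neg_zero]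

lemma IsAlternatingCoeff.jacCoeff_zero (hC : IsAlternatingCoeff C) (b d : G) :
    jacCoeff C 0 b d = 0 := by
  simp [jacCoeff, hC.zero_left, hC.zero_right]

lemma IsAlternatingCoeff.jacCoeff_self (hC : IsAlternatingCoeff C) (a d : G) :
    jacCoeff C a a d = 0 := by
  rw [jacCoeff, hC.self, hC.swap a d, add_comm d a]
  ring

lemma IsAlternatingCoeff.jacCoeff_eq_zero_of_add_eq_zero (hC : IsAlternatingCoeff C) {a b d : G}
    (h : a + b + d = 0) : jacCoeff C a b d = 0 := by
  simp [jacCoeff, hC.eq_zero_of_add_eq_zero _ _ h,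
    hC.eq_zero_of_add_eq_zero (b + d) a (by rw [← h]; abel),
    hC.eq_zero_of_add_eq_zero (d + a) b (by rw [← h]; abel)]

end

lemma IsAlternatingCoeff.isJacobiTriple {G R : Type*} [AddCommGroupWithOne G] [CommRing R]
    {C : G → G → R} (hC : IsAlternatingCoeff C) {a b d : G} (hsum : a + b + d = 1)
    (h : jacCoeff C a b d ≠ 0) : IsJacobiTriple a b d := by
  have hrot : jacCoeff C b d a ≠ 0 := by rwa [jacCoeff_rotate]
  have hrot' : jacCoeff C d a b ≠ 0 := by rwa [jacCoeff_rotate]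
  refine ⟨hsum, ?_, ?_, ?_, ?_, ?_, ?_⟩ <;> rintro rfl
  exacts [h (hC.jacCoeff_zero _ _), hrot (hC.jacCoeff_zero _ _), hrot' (hC.jacCoeff_zero _ _),
    h (hC.jacCoeff_self _ _), hrot (hC.jacCoeff_self _ _), hrot' (hC.jacCoeff_self _ _)]

lemma le_norm_or_le_norm_of_norm_add_lt {V : Type*} [SeminormedAddCommGroup V]
    [IsUltrametricDist V] {u v w : V} {r : ℝ} (h : ‖u + v + w‖ < r) (hw : r ≤ ‖w‖) :
    r ≤ ‖u‖ ∨ r ≤ ‖v‖ := by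
  by_contra! huv
  have hadd : ‖u + v‖ < r := (IsUltrametricDist.norm_add_le_max u v).trans_lt (max_lt huv.1 huv.2)
  have hsub := IsUltrametricDist.norm_add_le_max (u + v + w) (-(u + v))
  rw [norm_neg, add_neg_cancel_comm] at hsub
  exact (hw.trans hsub).not_gt (max_lt h hadd)

variable {q : ℕ} {F : Type*} [NormedField F]

theorem IsAlternatingCoeff.isLieSupport [IsUltrametricDist F] {C : ZMod q → ZMod q → F}
    (hC : IsAlternatingCoeff C) {M : ℝ} (hM : 0 < M) (hCM : ∀ a b, ‖C a b‖ ≤ M)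
    (hJ : ∀ a b d, ‖jacCoeff C a b d‖ < M ^ 2) : IsLieSupport fun a b => ‖C a b‖ = M := by
  have hswap : ∀ a b, ‖C b a‖ = ‖C a b‖ := fun a b => by rw [hC.swap a b, norm_neg]
  have hne : ∀ {a b}, ‖C a b‖ = M → C a b ≠ 0 := fun h =>
    norm_pos_iff.1 (h ▸ hM)
  have hmul : ∀ {a b a' b'}, M ^ 2 ≤ ‖C a b * C a' b'‖ → ‖C a b‖ = M ∧ ‖C a' b'‖ = M := by
    intro a b a' b' h
    rw [norm_mul] at h
    have := hCM a b
    have := hCM a' b'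
    constructor <;> nlinarith [norm_nonneg (C a b), norm_nonneg (C a' b')]
  refine ⟨fun {a b} h => (hswap a b).trans h, fun a h => hne h (hC.self a),
    fun b h => hne h (hC.zero_left b),
    fun h h0 => hne h (hC.eq_zero_of_add_eq_zero _ _ h0), fun {s t v} hsv htsv => ?_⟩
  have hlarge : M ^ 2 ≤ ‖C s v * C (s + v) t‖ := by
    rw [norm_mul, hsv, hswap, htsv, sq]
  have hsmall : ‖C t s * C (t + s) v + C v t * C (v + t) s + C s v * C (s + v) t‖ < M ^ 2 := by
    simpa only [jacCoeff, add_right_comm] using hJ t s v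
  refine (le_norm_or_le_norm_of_norm_add_lt hsmall hlarge).imp hmul fun h => ?_
  rw [hswap v t, hswap _ s, add_comm t v]
  exact hmul h

end JacobiCoefficients

section TwistedBracket

lemma sum_sum_one_sub_rotate {G R : Type*} [AddCommGroupWithOne G] [Fintype G] [AddCommMonoid R]
    (f : G → G → G → R) : ∑ a, ∑ b, f a b (1 - a - b) = ∑ a, ∑ b, f b (1 - a - b) a := by
  conv_rhs => rw [Finset.sum_comm]
  refine Finset.sum_congr rfl fun a _ => Fintype.sum_equiv (Equiv.subLeft (1 - a)) _ _ fun b => ?_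
  simp [sub_sub]

variable {q : ℕ} [Fact q.Prime] {F : Type*}

/-- The bracket `∑ₜ cₜ σₜ(x) σ₁₋ₜ(y)` on a ring with an action `σ` of the multiplicative monoid
`ℤ/q`. The action is by non-unital ring homomorphisms so that `σ 0 = 0` is allowed. -/
def twistedBracket [CommRing F] (σ : ZMod q →*₀ (F →ₙ+* F)) (c : ZMod q → F) (x y : F) : F :=
  ∑ t, c t * σ t x * σ (1 - t) y

/-- The left-hand side of the Jacobi identity for the bracket `Γ`. -/
def jacobiator {R : Type*} [Add R] (Γ : R → R → R) (x y z : R) : R :=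
  Γ (Γ x y) z + Γ (Γ y z) x + Γ (Γ z x) y

/-- The coefficient of `σ_a(x) σ_b(y)` in the image of the twisted bracket of `x` and `y`
under `σ_{a+b}`. -/
def structConst [CommRing F] (σ : ZMod q →*₀ (F →ₙ+* F)) (c : ZMod q → F) (a b : ZMod q) : F :=
  σ (a + b) (c (a / (a + b)))

/-- The coefficients `c` define an alternating twisted bracket. -/
structure IsSkew {G R : Type*} [AddGroupWithOne G] [AddGroup R] (c : G → R) : Prop where
  zero : c 0 = 0
  one_sub : ∀ t, c (1 - t) = -c t

lemma IsSkew.one {G R : Type*} [AddGroupWithOne G] [AddGroup R] {c : G → R} (hc : IsSkew c) :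
    c 1 = 0 := by
  rw [← sub_zero 1, hc.one_sub, hc.zero, neg_zero]

section CommRing

variable [CommRing F] {σ : ZMod q →*₀ (F →ₙ+* F)} {c : ZMod q → F}

lemma structConst_mul (n a b : ZMod q) :
    structConst σ c (n * a) (n * b) = σ n (structConst σ c a b) := by
  rcases eq_or_ne n 0 with rfl | hn
  · simp [structConst]
  · simp [structConst, ← mul_add, mul_div_mul_left _ _ hn]

lemma structConst_one_sub (a : ZMod q) : structConst σ c a (1 - a) = c a := by
  simp [structConst]

lemma jacCoeff_structConst_mul (n a b d : ZMod q) :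
    jacCoeff (structConst σ c) (n * a) (n * b) (n * d) =
      σ n (jacCoeff (structConst σ c) a b d) := by
  simp only [jacCoeff, ← mul_add, structConst_mul, map_add, map_mul]

lemma IsSkew.isAlternatingCoeff [IsAddTorsionFree F] (hc : IsSkew c) :
    IsAlternatingCoeff (structConst σ c) := by
  have hswap : ∀ a b, structConst σ c b a = -structConst σ c a b := by
    intro a b
    rcases eq_or_ne (a + b) 0 with h | h
    · simp [structConst, h, add_comm b a]
    · rw [structConst, structConst, ← map_neg, ← hc.one_sub, one_sub_div h, add_sub_cancel_left,
        add_comm b a]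
  refine ⟨fun a => self_eq_neg.1 (hswap a a), hswap, fun b => ?_, fun a b h => ?_⟩
  · simp [structConst, hc.zero]
  · simp [structConst, h]

lemma map_twistedBracket (n : ZMod q) (x y : F) :
    σ n (twistedBracket σ c x y) = ∑ a, structConst σ c a (n - a) * σ a x * σ (n - a) y := by
  rcases eq_or_ne n 0 with rfl | hn
  · simp [structConst]
  rw [twistedBracket, map_sum]
  refine Fintype.sum_equiv (Equiv.mulLeft₀ n hn) _ _ fun t => ?_
  simp [structConst, ← mul_one_sub, mul_div_cancel_left₀ _ hn, ← mul_add]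

lemma twistedBracket_twistedBracket (x y z : F) :
    twistedBracket σ c (twistedBracket σ c x y) z =
      ∑ a, ∑ b, structConst σ c a b * structConst σ c (a + b) (1 - a - b) *
        (σ a x * σ b y * σ (1 - a - b) z) := by
  have hexpand : twistedBracket σ c (twistedBracket σ c x y) z =
      ∑ s, ∑ a, structConst σ c a (s - a) * structConst σ c s (1 - s) *
        (σ a x * σ (s - a) y * σ (1 - s) z) := by
    simp only [twistedBracket.eq_1 σ c (twistedBracket σ c x y), map_twistedBracket,
      structConst_one_sub, Finset.mul_sum, Finset.sum_mul]
    exact Finset.sum_congr rfl fun s _ => Finset.sum_congr rfl fun a _ => by ring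
  rw [hexpand, Finset.sum_comm]
  refine Finset.sum_congr rfl fun a _ => Fintype.sum_equiv (Equiv.subRight a) _ _ fun s => ?_
  simp [sub_sub]

theorem jacobiator_twistedBracket (x y z : F) :
    jacobiator (twistedBracket σ c) x y z =
      ∑ a, ∑ b, jacCoeff (structConst σ c) a b (1 - a - b) *
        (σ a x * σ b y * σ (1 - a - b) z) := by
  simp only [jacobiator, twistedBracket_twistedBracket]
  rw [sum_sum_one_sub_rotate fun a b d => structConst σ c a b * structConst σ c (a + b) d *
      (σ a y * σ b z * σ d x),
    sum_sum_one_sub_rotate fun a b d => structConst σ c a b * structConst σ c (a + b) d *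
      (σ a z * σ b x * σ d y),
    sum_sum_one_sub_rotate fun a b d => structConst σ c b d * structConst σ c (b + d) a *
      (σ b z * σ d x * σ a y)]
  simp only [← Finset.sum_add_distrib]
  refine Finset.sum_congr rfl fun a _ => Finset.sum_congr rfl fun b _ => ?_
  rw [jacCoeff]
  ring

end CommRing

theorem IsSkew.exists_sq_le_norm_jacCoeff [NormedField F] [CharZero F] [IsUltrametricDist F]
    {σ : ZMod q →*₀ (F →ₙ+* F)} (hσ : ∀ a ≠ 0, ∀ x, ‖σ a x‖ = ‖x‖) {c : ZMod q → F}
    (hc : IsSkew c) {t₀ : ZMod q} (hct : c t₀ ≠ 0) (hmax : ∀ t, ‖c t‖ ≤ ‖c t₀‖) :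
    ∃ a b d, IsJacobiTriple a b d ∧ ‖c t₀‖ ^ 2 ≤ ‖jacCoeff (structConst σ c) a b d‖ := by
  have hC : IsAlternatingCoeff (structConst σ c) := hc.isAlternatingCoeff
  have hM : 0 < ‖c t₀‖ := norm_pos_iff.2 hct
  by_contra! hcon
  have hsmall : ∀ a b d, a + b + d = 1 → ‖jacCoeff (structConst σ c) a b d‖ < ‖c t₀‖ ^ 2 := by
    intro a b d hsum
    by_cases h0 : jacCoeff (structConst σ c) a b d = 0
    · rw [h0, norm_zero]
      positivity
    · exact hcon a b d (hC.isJacobiTriple hsum h0)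
  have hE : IsLieSupport fun a b => ‖structConst σ c a b‖ = ‖c t₀‖ := by
    refine hC.isLieSupport hM (fun a b => ?_) fun a b d => ?_
    · by_cases h : a + b = 0
      · rw [hC.eq_zero_of_add_eq_zero a b h, norm_zero]
        exact hM.le
      · exact (hσ _ h _).trans_le (hmax _)
    · by_cases h : a + b + d = 0
      · rw [hC.jacCoeff_eq_zero_of_add_eq_zero h, norm_zero]
        positivity
      · have key := hsmall ((a + b + d)⁻¹ * a) ((a + b + d)⁻¹ * b) ((a + b + d)⁻¹ * d)
          (by rw [← mul_add, ← mul_add, inv_mul_cancel₀ h])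
        rwa [jacCoeff_structConst_mul, hσ _ (inv_ne_zero h)] at key
  refine hE.not_perfect fun n hn => ⟨n * t₀, n * (1 - t₀), by ring, ?_⟩
  rw [structConst_mul, structConst_one_sub, hσ n hn]

end TwistedBracket

section Separation

section Isolation

variable {ι V F : Type*} [Fintype ι] [NormedField F] [IsUltrametricDist F] {χ : ι → F}
  {φ : ι → V → F} {T : V → V} {S : Set V} {B : ℝ}

-- Replacing `x` by `T x - χ a₀ • x` multiplies the `a`-th summand by `χ a - χ a₀`.
lemma norm_sum_mul_prod_sub_le (hφ : ∀ a x, φ a (T x) = χ a * φ a x) (hχ : ∀ a, ‖χ a‖ ≤ 1)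
    (hT : Set.MapsTo T S S) {f : ι → F} (hB : ∀ x ∈ S, ‖∑ a, f a * φ a x‖ ≤ B) (A : Finset ι) :
    ∀ x ∈ S, ‖∑ a, f a * (∏ a' ∈ A, (χ a - χ a')) * φ a x‖ ≤ B := by
  induction A using Finset.cons_induction with
  | empty => simpa using hB
  | cons a₀ A ha₀ ih =>
    intro x hx
    have hsplit : ∑ a, f a * (∏ a' ∈ A.cons a₀ ha₀, (χ a - χ a')) * φ a x =
        ∑ a, f a * (∏ a' ∈ A, (χ a - χ a')) * φ a (T x) +
          -(χ a₀ * ∑ a, f a * (∏ a' ∈ A, (χ a - χ a')) * φ a x) := by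
      simp only [Finset.mul_sum, ← Finset.sum_neg_distrib, ← Finset.sum_add_distrib,
        Finset.prod_cons, hφ]
      exact Finset.sum_congr rfl fun a _ => by ring
    rw [hsplit]
    refine (IsUltrametricDist.norm_add_le_max _ _).trans (max_le (ih _ (hT hx)) ?_)
    rw [norm_neg, norm_mul]
    exact (mul_le_of_le_one_left (norm_nonneg _) (hχ a₀)).trans (ih x hx)

lemma norm_coeff_mul_prod_sub_le (hφ : ∀ a x, φ a (T x) = χ a * φ a x) (hχ : ∀ a, ‖χ a‖ ≤ 1)
    (hT : Set.MapsTo T S S) {f : ι → F} (hB : ∀ x ∈ S, ‖∑ a, f a * φ a x‖ ≤ B) {a : ι}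
    {A : Finset ι} (hA : ∀ a', f a' ≠ 0 → a' = a ∨ a' ∈ A) {x : V} (hx : x ∈ S) :
    ‖f a * (∏ a' ∈ A, (χ a - χ a')) * φ a x‖ ≤ B := by
  have hsum := norm_sum_mul_prod_sub_le hφ hχ hT hB A x hx
  rwa [Fintype.sum_eq_single a fun a' ha' => ?_] at hsum
  by_cases hf : f a' = 0
  · rw [hf, zero_mul, zero_mul]
  · rw [Finset.prod_eq_zero ((hA a' hf).resolve_left ha') (sub_self _), mul_zero, zero_mul]

theorem norm_coeff_mul_prod_sub_mul_prod_sub_le (hφ : ∀ a x, φ a (T x) = χ a * φ a x)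
    (hχ : ∀ a, ‖χ a‖ ≤ 1) (hT : Set.MapsTo T S S) {g : ι → ι → F}
    (hB : ∀ x ∈ S, ∀ y ∈ S, ‖∑ a, ∑ b, g a b * (φ a x * φ b y)‖ ≤ B) {a b : ι} {A D : Finset ι}
    (hb : b ∉ D) (hAD : ∀ a' b', g a' b' ≠ 0 → (a' = a ∧ b' = b) ∨ a' ∈ A ∨ b' ∈ D) {x y : V}
    (hx : x ∈ S) (hy : y ∈ S) :
    ‖g a b * (∏ a' ∈ A, (χ a - χ a')) * φ a x * (∏ b' ∈ D, (χ b - χ b')) * φ b y‖ ≤ B := by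
  set P : ι → F := fun a => ∏ a' ∈ A, (χ a - χ a')
  have hP_zero : ∀ a' ∈ A, P a' = 0 := fun a' ha' => Finset.prod_eq_zero ha' (sub_self _)
  have hfirst : ∀ y ∈ S, ‖∑ b, (∑ a, g a b * P a * φ a x) * φ b y‖ ≤ B := by
    intro y hy
    have := norm_sum_mul_prod_sub_le (f := fun a => ∑ b, g a b * φ b y) hφ hχ hT
      (fun x hx => (congrArg norm <| Finset.sum_congr rfl fun a _ => by
        rw [Finset.sum_mul]
        exact Finset.sum_congr rfl fun b _ => by ring).trans_le (hB x hx y hy)) A x hx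
    refine (congrArg norm ?_).trans_le this
    simp only [Finset.sum_mul]
    rw [Finset.sum_comm]
    exact Finset.sum_congr rfl fun a _ => Finset.sum_congr rfl fun b _ => by ring
  have hsum : ∑ a', g a' b * P a' * φ a' x = g a b * P a * φ a x := by
    refine Fintype.sum_eq_single a fun a' ha' => ?_
    by_cases hg : g a' b = 0
    · rw [hg, zero_mul, zero_mul]
    · rcases hAD a' b hg with h | h | h
      exacts [absurd h.1 ha', by rw [hP_zero a' h, mul_zero, zero_mul], absurd h hb]
  rw [← hsum]
  refine norm_coeff_mul_prod_sub_le hφ hχ hT hfirst (fun b' hb' => ?_) hy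
  obtain ⟨a', -, ha'⟩ := Finset.exists_ne_zero_of_sum_ne_zero hb'
  rcases hAD a' b' (left_ne_zero_of_mul (left_ne_zero_of_mul ha')) with h | h | h
  exacts [.inl h.2, absurd (hP_zero a' h) (right_ne_zero_of_mul (left_ne_zero_of_mul ha')), .inr h]

end Isolation

/-- Among all Jacobi triples, the one starting with `a, b` is isolated by excluding at most `n`
values of the first two degrees. -/
def IsIsolable {G : Type*} [AddMonoidWithOne G] (n : ℕ) (a b : G) : Prop :=
  ∃ A D : Finset G, A.card + D.card ≤ n ∧ a ∉ A ∧ b ∉ D ∧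
    ∀ a' b' d', IsJacobiTriple a' b' d' → (a' = a ∧ b' = b) ∨ a' ∈ A ∨ b' ∈ D

section Field

variable {k : Type*} [Field k] [DecidableEq k] {a b d : k}

lemma IsJacobiTriple.notMem_exceptional (h2 : (2 : k) ≠ 0) (h : IsJacobiTriple a b d) :
    b ∉ ({0, a, 1 - a, 1 - 2 * a, (1 - a) / 2} : Finset k) := by
  have hd : d = 1 - a - b := by rw [← h.sum]; ring
  simp only [Finset.mem_insert, Finset.mem_singleton, not_or]
  refine ⟨h.mid_ne_zero, h.left_ne_mid.symm, ?_, ?_, ?_⟩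
  · rintro rfl
    exact h.right_ne_zero (by rw [hd]; ring)
  · rintro rfl
    exact h.right_ne_left (by rw [hd]; ring)
  · rintro rfl
    exact h.mid_ne_right (by rw [hd]; field_simp; ring)

lemma card_exceptional (h2 : (2 : k) ≠ 0) (ha0 : a ≠ 0) (ha1 : a ≠ 1) (ha2 : 2 * a ≠ 1)
    (ha3 : 3 * a ≠ 1) : ({0, a, 1 - a, 1 - 2 * a, (1 - a) / 2} : Finset k).card = 5 := by
  have h1a : 1 - a ≠ 0 := sub_ne_zero.2 ha1.symm
  have h12a : 1 - 2 * a ≠ 0 := sub_ne_zero.2 ha2.symm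
  have h13a : 1 - 3 * a ≠ 0 := sub_ne_zero.2 ha3.symm
  rw [Finset.card_insert_of_notMem, Finset.card_insert_of_notMem, Finset.card_insert_of_notMem,
    Finset.card_insert_of_notMem, Finset.card_singleton] <;>
  simp only [Finset.mem_insert, Finset.mem_singleton, not_or, eq_div_iff h2]
  · exact fun h => h13a (by linear_combination h)
  · exact ⟨fun h => ha0 (by linear_combination h), fun h => h1a (by linear_combination h)⟩
  · exact ⟨fun h => h12a (by linear_combination -h), fun h => h13a (by linear_combination -h),
      fun h => h13a (by linear_combination -h)⟩
  · exact ⟨ha0.symm, h1a.symm, h12a.symm, fun h => h1a (by linear_combination -h)⟩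

lemma IsJacobiTriple.isIsolable_of_notMem [Fintype k] (h2 : (2 : k) ≠ 0)
    (h : IsJacobiTriple a b d) (ha : a ∉ ({1, 2⁻¹, 3⁻¹} : Finset k)) :
    IsIsolable (2 * Fintype.card k - 8) a b := by
  simp only [Finset.mem_insert, Finset.mem_singleton, not_or] at ha
  obtain ⟨ha1, ha2, ha3⟩ := ha
  set R : Finset k := {0, a, 1 - a, 1 - 2 * a, (1 - a) / 2}
  have hR : R.card = 5 := card_exceptional h2 h.left_ne_zero ha1
    (fun h => ha2 (eq_inv_of_mul_eq_one_right h)) (fun h => ha3 (eq_inv_of_mul_eq_one_right h))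
  have hbR : b ∈ Rᶜ := Finset.mem_compl.2 (h.notMem_exceptional h2)
  have hR_pos : 0 < Rᶜ.card := Finset.card_pos.2 ⟨b, hbR⟩
  refine ⟨{0, a}ᶜ, Rᶜ.erase b, ?_, by simp, by simp, fun a' b' d' h' => ?_⟩
  · rw [Finset.card_erase_of_mem hbR, Finset.card_compl, Finset.card_compl, hR,
      Finset.card_pair h.left_ne_zero.symm]
    rw [Finset.card_compl] at hR_pos
    omega
  · by_cases ha' : a' = a
    · subst ha'
      by_cases hb' : b' = b
      · exact .inl ⟨rfl, hb'⟩
      · exact .inr (.inr (Finset.mem_erase.2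
          ⟨hb', Finset.mem_compl.2 (h'.notMem_exceptional h2)⟩))
    · exact .inr (.inl (by simp [ha', h'.left_ne_zero]))

-- Three distinct elements of `{1, 1/2, 1/3}` sum to `11/6`, not to `1`.
lemma IsJacobiTriple.exists_notMem (h2 : (2 : k) ≠ 0) (h3 : (3 : k) ≠ 0) (h5 : (5 : k) ≠ 0)
    (h : IsJacobiTriple a b d) :
    a ∉ ({1, 2⁻¹, 3⁻¹} : Finset k) ∨ b ∉ ({1, 2⁻¹, 3⁻¹} : Finset k) ∨
      d ∉ ({1, 2⁻¹, 3⁻¹} : Finset k) := by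
  by_contra! hmem
  have hab : a ∉ ({b, d} : Finset k) := by simp [h.left_ne_mid, h.right_ne_left.symm]
  have hbd : b ∉ ({d} : Finset k) := by simp [h.mid_ne_right]
  have heq : ({a, b, d} : Finset k) = {1, 2⁻¹, 3⁻¹} := by
    refine Finset.eq_of_subset_of_card_le ?_ (Finset.card_le_three.trans_eq ?_)
    · simp only [Finset.insert_subset_iff, Finset.singleton_subset_iff]
      exact hmem
    · rw [Finset.card_insert_of_notMem hab, Finset.card_pair h.mid_ne_right]
  have h12 : (1 : k) ∉ ({2⁻¹, 3⁻¹} : Finset k) := by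
    simp only [Finset.mem_insert, Finset.mem_singleton, not_or, ← inv_eq_iff_eq_inv, inv_one]
    exact ⟨fun h => one_ne_zero (by linear_combination -h : (1 : k) = 0),
      fun h => h2 (by linear_combination -h)⟩
  have h23 : (2⁻¹ : k) ∉ ({3⁻¹} : Finset k) := by
    rw [Finset.mem_singleton, inv_inj]
    exact fun h => one_ne_zero (by linear_combination -h : (1 : k) = 0)
  have hsum : a + (b + d) = 1 + (2⁻¹ + 3⁻¹) := by
    simpa only [Finset.sum_insert hab, Finset.sum_insert hbd, Finset.sum_insert h12,
      Finset.sum_insert h23, Finset.sum_singleton] using congrArg (fun s => ∑ x ∈ s, x) heq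
  rw [← add_assoc, h.sum] at hsum
  field_simp at hsum
  exact h5 (by linear_combination -hsum)

end Field

lemma IsJacobiTriple.mem_of_zmod_five {a b d : ZMod 5} (h : IsJacobiTriple a b d) :
    a ∈ ({1, 2, 3} : Finset (ZMod 5)) := by
  obtain ⟨h1, h2, h3, h4, h5, h6, h7⟩ := h
  revert a b d
  decide

lemma IsJacobiTriple.isIsolable_of_zmod_five {a b d : ZMod 5} (h : IsJacobiTriple a b d) :
    IsIsolable 3 a b := by
  refine ⟨({1, 2, 3} : Finset (ZMod 5)).erase a, (({1, 2, 3} : Finset (ZMod 5)).erase a).erase b,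
    ?_, by simp, by simp, fun a' b' d' h' => ?_⟩
  · rw [Finset.card_erase_of_mem (Finset.mem_erase.2
        ⟨h.left_ne_mid.symm, h.rotate.mem_of_zmod_five⟩),
      Finset.card_erase_of_mem h.mem_of_zmod_five]
    decide
  · rcases eq_or_ne a' a with rfl | ha
    · rcases eq_or_ne b' b with rfl | hb
      · exact .inl ⟨rfl, rfl⟩
      · exact .inr (.inr (Finset.mem_erase.2
          ⟨hb, Finset.mem_erase.2 ⟨h'.left_ne_mid.symm, h'.rotate.mem_of_zmod_five⟩⟩))
    · exact .inr (.inl (Finset.mem_erase.2 ⟨ha, h'.mem_of_zmod_five⟩))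

variable {q : ℕ} [Fact q.Prime]

lemma IsIsolable.mono {G : Type*} [AddMonoidWithOne G] {m n : ℕ} (hmn : m ≤ n) {a b : G}
    (h : IsIsolable m a b) : IsIsolable n a b := by
  obtain ⟨A, D, hcard, hAD⟩ := h
  exact ⟨A, D, hcard.trans hmn, hAD⟩

lemma IsJacobiTriple.exists_isIsolable (hq : 5 ≤ q) {a b d : ZMod q} (h : IsJacobiTriple a b d) :
    IsIsolable (2 * q - 7) a b ∨ IsIsolable (2 * q - 7) b d ∨ IsIsolable (2 * q - 7) d a := by
  rcases hq.eq_or_lt with rfl | hq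
  · exact .inl h.isIsolable_of_zmod_five
  have hcast : ∀ n : ℕ, 0 < n → n < q → (n : ZMod q) ≠ 0 := fun n h0 hn h =>
    (Nat.le_of_dvd h0 ((ZMod.natCast_eq_zero_iff _ _).1 h)).not_gt hn
  have h2 : (2 : ZMod q) ≠ 0 := mod_cast hcast 2 (by lia) (by lia)
  have h3 : (3 : ZMod q) ≠ 0 := mod_cast hcast 3 (by lia) (by lia)
  have h5 : (5 : ZMod q) ≠ 0 := mod_cast hcast 5 (by lia) (by lia)
  have hcard : 2 * Fintype.card (ZMod q) - 8 ≤ 2 * q - 7 := by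
    rw [ZMod.card]
    lia
  exact (h.exists_notMem h2 h3 h5).imp (fun ha => (h.isIsolable_of_notMem h2 ha).mono hcard)
    (Or.imp (fun hb => (h.rotate.isIsolable_of_notMem h2 hb).mono hcard)
      fun hd => (h.rotate.rotate.isIsolable_of_notMem h2 hd).mono hcard)

end Separation

section LowerBound

variable {q : ℕ} [Fact q.Prime] {F : Type*} [NormedField F] [CharZero F] [IsUltrametricDist F]
  {σ : ZMod q →*₀ (F →ₙ+* F)} {c χ : ZMod q → F} {ζ : F} {S : Set F} {ρ B : ℝ}

lemma IsSkew.norm_jacCoeff_mul_pow_le (hc : IsSkew c) (hσ : ∀ a ≠ 0, ∀ x, ‖σ a x‖ = ‖x‖)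
    (hσχ : ∀ a x, σ a (ζ * x) = χ a * σ a x) (hχ : ∀ a, ‖χ a‖ ≤ 1)
    (hρ : ∀ a b, a ≠ b → ‖χ a - χ b‖ = ρ) (hS : Set.MapsTo (ζ * ·) S S)
    (hB : ∀ x ∈ S, ∀ y ∈ S, ∀ z ∈ S, ‖jacobiator (twistedBracket σ c) x y z‖ ≤ B)
    {a b d : ZMod q} (h : IsJacobiTriple a b d) {n : ℕ} (hn : IsIsolable n a b) {z : F}
    (hz : z ∈ S) : ‖jacCoeff (structConst σ c) a b d‖ * ρ ^ n * ‖z‖ ^ 3 ≤ B := by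
  obtain ⟨A, D, hcard, ha, hb, hAD⟩ := hn
  have hd : 1 - a - b = d := by rw [← h.sum]; ring
  have hρ0 : 0 ≤ ρ := hρ 0 1 zero_ne_one ▸ norm_nonneg _
  have hρ1 : ρ ≤ 1 := hρ 0 1 zero_ne_one ▸ sub_eq_add_neg (χ 0) (χ 1) ▸
    (IsUltrametricDist.norm_add_le_max _ _).trans (max_le (hχ 0) (norm_neg (χ 1) ▸ hχ 1))
  have hprod : ∀ {a : ZMod q} {A : Finset (ZMod q)}, a ∉ A →
      ‖∏ a' ∈ A, (χ a - χ a')‖ = ρ ^ A.card := fun {a A} ha => by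
    rw [norm_prod]
    exact Finset.prod_eq_pow_card fun a' ha' => hρ a a' fun h => ha (h ▸ ha')
  have key := norm_coeff_mul_prod_sub_mul_prod_sub_le
    (g := fun a b => jacCoeff (structConst σ c) a b (1 - a - b) * σ (1 - a - b) z)
    hσχ hχ hS (B := B) (fun x hx y hy => ?_) hb (fun a' b' hab => hAD a' b' (1 - a' - b')
      (hc.isAlternatingCoeff.isJacobiTriple (by ring) (left_ne_zero_of_mul hab))) hz hz
  · simp only [norm_mul, hd, hprod ha, hprod hb, hσ _ h.left_ne_zero, hσ _ h.mid_ne_zero,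
      hσ _ h.right_ne_zero] at key
    calc ‖jacCoeff (structConst σ c) a b d‖ * ρ ^ n * ‖z‖ ^ 3
      _ ≤ ‖jacCoeff (structConst σ c) a b d‖ * ρ ^ (A.card + D.card) * ‖z‖ ^ 3 := by
          gcongr ?_ * ?_ * _
          exact pow_le_pow_of_le_one hρ0 hρ1 hcard
      _ ≤ B := by
          rw [pow_add]
          linarith
  · refine (congrArg norm ?_).trans_le (hB x hx y hy z hz)
    rw [jacobiator_twistedBracket]
    exact Finset.sum_congr rfl fun a _ => Finset.sum_congr rfl fun b _ => by ring

theorem IsSkew.sq_norm_mul_pow_le (hq : 5 ≤ q) (hc : IsSkew c)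
    (hσ : ∀ a ≠ 0, ∀ x, ‖σ a x‖ = ‖x‖) (hσχ : ∀ a x, σ a (ζ * x) = χ a * σ a x)
    (hχ : ∀ a, ‖χ a‖ ≤ 1) (hρ : ∀ a b, a ≠ b → ‖χ a - χ b‖ = ρ)
    (hS : Set.MapsTo (ζ * ·) S S)
    (hB : ∀ x ∈ S, ∀ y ∈ S, ∀ z ∈ S, ‖jacobiator (twistedBracket σ c) x y z‖ ≤ B)
    {t₀ : ZMod q} (hct : c t₀ ≠ 0) (hmax : ∀ t, ‖c t‖ ≤ ‖c t₀‖) {z : F} (hz : z ∈ S) :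
    ‖c t₀‖ ^ 2 * ρ ^ (2 * q - 7) * ‖z‖ ^ 3 ≤ B := by
  have hρ0 : 0 ≤ ρ := hρ 0 1 zero_ne_one ▸ norm_nonneg _
  suffices ∃ a b d, IsJacobiTriple a b d ∧ ‖c t₀‖ ^ 2 ≤ ‖jacCoeff (structConst σ c) a b d‖ ∧
      IsIsolable (2 * q - 7) a b by
    obtain ⟨a, b, d, h, hlarge, hiso⟩ := this
    refine le_trans ?_ (hc.norm_jacCoeff_mul_pow_le hσ hσχ hχ hρ hS hB h hiso hz)
    gcongr
  obtain ⟨a, b, d, h, hlarge⟩ := hc.exists_sq_le_norm_jacCoeff hσ hct hmax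
  rcases h.exists_isIsolable hq with hab | hbd | hda
  · exact ⟨a, b, d, h, hlarge, hab⟩
  · exact ⟨b, d, a, h.rotate, by rwa [jacCoeff_rotate], hbd⟩
  · exact ⟨d, a, b, h.rotate.rotate, by rwa [jacCoeff_rotate, jacCoeff_rotate], hda⟩

end LowerBound

section Cyclotomic

open Polynomial

lemma monic_cyclotomic_comp_X_add_one (n : ℕ) (R : Type*) [CommRing R] [Nontrivial R] :
    ((cyclotomic n R).comp (X + 1)).Monic := by
  simpa using (cyclotomic.monic n R).comp_X_add_C 1

lemma map_cyclotomic_comp_X_add_one {R S : Type*} [CommRing R] [CommRing S] (f : R →+* S) (n : ℕ) :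
    ((cyclotomic n R).comp (X + 1)).map f = (cyclotomic n S).comp (X + 1) := by
  simp [Polynomial.map_comp]

variable {q : ℕ} [Fact q.Prime]

lemma cyclotomic_padicInt_comp_X_add_one_isEisensteinAt :
    ((cyclotomic q ℤ_[q]).comp (X + 1)).IsEisensteinAt (Submodule.span ℤ_[q] {(q : ℤ_[q])}) := by
  have hprime : Prime (q : ℤ_[q]) := PadicInt.prime_p
  have hweak := (cyclotomic_comp_X_add_one_isEisensteinAt q).isWeaklyEisensteinAt.map
    (Int.castRingHom ℤ_[q])
  simp only [map_cyclotomic_comp_X_add_one, Ideal.submodule_span_eq, Ideal.map_span,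
    Set.image_singleton, map_natCast] at hweak
  refine (monic_cyclotomic_comp_X_add_one q _).isEisensteinAt_of_mem_of_notMem
    ((Ideal.span_singleton_prime hprime.ne_zero).2 hprime).ne_top hweak.mem ?_
  have hcoeff : ((cyclotomic q ℤ_[q]).comp (X + 1)).coeff 0 = q := by
    rw [coeff_zero_eq_eval_zero, eval_comp, cyclotomic_prime]
    simp [eval_geom_sum]
  rw [hcoeff, Ideal.submodule_span_eq, Ideal.span_singleton_pow, Ideal.mem_span_singleton]
  exact fun h => hprime.not_isUnit (isUnit_of_dvd_one
    ((mul_dvd_mul_iff_left hprime.ne_zero).1 (by simpa [sq] using h)))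

lemma cyclotomic_padic_irreducible : Irreducible (cyclotomic q ℚ_[q]) := by
  have hprime : Prime (q : ℤ_[q]) := PadicInt.prime_p
  have hcomp : Irreducible ((cyclotomic q ℤ_[q]).comp (X + 1)) :=
    cyclotomic_padicInt_comp_X_add_one_isEisensteinAt.irreducible
      ((Ideal.span_singleton_prime hprime.ne_zero).2 hprime)
      (monic_cyclotomic_comp_X_add_one q _).isPrimitive
      (by simpa [natDegree_comp, ← C_1, natDegree_X_add_C, -map_one, natDegree_cyclotomic]
        using (Fact.out : q.Prime).pos)
  have h_irred : Irreducible (cyclotomic q ℤ_[q]) :=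
    (MulEquiv.irreducible_iff (algEquivAevalXAddC (1 : ℤ_[q]))).1
      (by simpa [algEquivAevalXAddC, aeval_def, comp, algebraMap_eq] using hcomp)
  simpa using ((cyclotomic.monic q _).irreducible_iff_irreducible_map_fraction_map
    (K := ℚ_[q])).1 h_irred

lemma isCyclotomicExtension_of_adjoin_eq_top {n : ℕ} [NeZero n] {k L : Type*} [Field k] [Field L]
    [Algebra k L] {ζ : L} (hζ : IsPrimitiveRoot ζ n) (hgen : Algebra.adjoin k {ζ} = ⊤) :
    IsCyclotomicExtension {n} k L := by
  rw [IsCyclotomicExtension.iff_singleton]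
  refine ⟨⟨ζ, hζ⟩, fun x => ?_⟩
  have hx : x ∈ Algebra.adjoin k {ζ} := hgen ▸ Algebra.mem_top
  exact Algebra.adjoin_mono (by simpa using hζ.pow_eq_one) hx

variable {k L : Type*} [Field k] [Field L] [Algebra k L] [IsCyclotomicExtension {q} k L]

/-- The Galois conjugations `σ_a : ζ ↦ ζ ^ a` of the `q`-th cyclotomic extension for
`a ∈ (ℤ/q)ˣ`, extended by `σ_0 = 0`, so that `a ↦ σ_a` is multiplicative on all of `ℤ/q`. -/
noncomputable def galConj (h : Irreducible (cyclotomic q k)) : ZMod q →*₀ (L →ₙ+* L) where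
  toFun a := if ha : a = 0 then 0 else NonUnitalRingHomClass.toNonUnitalRingHom
    ((IsCyclotomicExtension.autEquivPow L h).symm (Units.mk0 a ha))
  map_zero' := dif_pos rfl
  map_one' := by
    rw [dif_neg one_ne_zero, Units.mk0_one, map_one]
    rfl
  map_mul' a b := by
    by_cases ha : a = 0
    · simp [ha]
    by_cases hb : b = 0
    · simp [hb]
    simp only [ha, hb, mul_ne_zero ha hb, dite_false, Units.mk0_mul, map_mul]
    rfl

lemma galConj_apply (h : Irreducible (cyclotomic q k)) {a : ZMod q} (ha : a ≠ 0) (x : L) :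
    galConj h a x = (IsCyclotomicExtension.autEquivPow L h).symm (Units.mk0 a ha) x := by
  simp only [galConj, MonoidWithZeroHom.coe_mk, ZeroHom.coe_mk, dif_neg ha]
  rfl

lemma galConj_apply_primitiveRoot (h : Irreducible (cyclotomic q k)) {a : ZMod q} (ha : a ≠ 0)
    {ζ : L} (hζ : IsPrimitiveRoot ζ q) : galConj h a ζ = ζ ^ a.val := by
  have hzeta := IsCyclotomicExtension.zeta_spec q k L
  obtain ⟨n, -, hn⟩ := hzeta.eq_pow_of_pow_eq_one hζ.pow_eq_one
  rw [galConj_apply h ha, ← hn, map_pow, ← pow_mul, mul_comm, pow_mul]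
  congr 1
  have := hzeta.autToPow_spec k ((IsCyclotomicExtension.autEquivPow L h).symm (Units.mk0 a ha))
  rw [← this]
  congr 2
  exact congrArg Units.val
    (MulEquiv.apply_symm_apply (IsCyclotomicExtension.autEquivPow L h) (Units.mk0 a ha))

lemma galConj_addChar (h : Irreducible (cyclotomic q k)) {ε : AddChar (ZMod q) L}
    (hε : IsPrimitiveRoot (ε 1) q) {a : ZMod q} (ha : a ≠ 0) (b : ZMod q) :
    galConj h a (ε b) = ε (a * b) := by
  have hpow : ε b = ε 1 ^ b.val := by
    rw [← AddChar.map_nsmul_eq_pow, nsmul_one, ZMod.natCast_zmod_val]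
  rw [hpow, galConj_apply h ha, map_pow, ← galConj_apply h ha, galConj_apply_primitiveRoot h ha hε,
    ← pow_mul, ← AddChar.map_nsmul_eq_pow, nsmul_one, Nat.cast_mul, ZMod.natCast_zmod_val,
    ZMod.natCast_zmod_val]

lemma galConj_addChar_mul (h : Irreducible (cyclotomic q k)) {ε : AddChar (ZMod q) L}
    (hε : IsPrimitiveRoot (ε 1) q) (a b : ZMod q) (x : L) :
    galConj h a (ε b * x) = ε (a * b) * galConj h a x := by
  rcases eq_or_ne a 0 with rfl | ha
  · simp
  · rw [map_mul, galConj_addChar h hε ha]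

lemma galConj_smul (h : Irreducible (cyclotomic q k)) (a : ZMod q) (r : k) (x : L) :
    galConj h a (r • x) = r • galConj h a x := by
  rcases eq_or_ne a 0 with rfl | ha
  · simp
  · simp only [galConj_apply h ha, map_smul]

end Cyclotomic

section Integers

open Polynomial

lemma exists_ne_zero_smul_mem_adjoin_gen {R k L : Type*} [CommRing R] [IsDomain R] [Field k]
    [Algebra R k] [IsFractionRing R k] [Field L] [Algebra k L] [Algebra R L] [IsScalarTower R k L]
    (B : PowerBasis k L) (x : L) : ∃ b : R, b ≠ 0 ∧ b • x ∈ Algebra.adjoin R {B.gen} := by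
  obtain ⟨b, hb⟩ := IsLocalization.exist_integer_multiples_of_finite (nonZeroDivisors R)
    (B.basis.repr x)
  refine ⟨b, nonZeroDivisors.ne_zero b.2, ?_⟩
  rw [← B.basis.sum_repr x, Finset.smul_sum]
  refine Subalgebra.sum_mem _ fun j _ => ?_
  obtain ⟨r, hr⟩ := hb j
  rw [← smul_assoc, show (b : R) • B.basis.repr x j = _ from hr.symm, algebraMap_smul,
    B.basis_eq_pow]
  exact Subalgebra.smul_mem _ (pow_mem (Algebra.self_mem_adjoin_singleton _ _) _) _

variable {q : ℕ} [Fact q.Prime] {L : Type} [Field L] [Algebra ℚ_[q] L] [Algebra ℤ_[q] L]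
  [IsScalarTower ℤ_[q] ℚ_[q] L] [IsCyclotomicExtension {q} ℚ_[q] L]

lemma minpoly_sub_one_eq_cyclotomic_padicInt_comp {ζ : L} (hζ : IsPrimitiveRoot ζ q) :
    minpoly ℤ_[q] (ζ - 1) = (cyclotomic q ℤ_[q]).comp (X + 1) := by
  have hζ_int : IsIntegral ℤ_[q] (ζ - 1) :=
    (hζ.isIntegral (Fact.out : q.Prime).pos).tower_top.sub isIntegral_one
  refine map_injective _ (IsFractionRing.injective ℤ_[q] ℚ_[q]) ?_
  rw [← minpoly.isIntegrallyClosed_eq_field_fractions' ℚ_[q] hζ_int, map_cyclotomic_comp_X_add_one]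
  exact hζ.minpoly_sub_one_eq_cyclotomic_comp cyclotomic_padic_irreducible

lemma mem_adjoin_sub_one_of_isIntegral {ζ x : L} (hζ : IsPrimitiveRoot ζ q)
    (hx : IsIntegral ℤ_[q] x) : x ∈ Algebra.adjoin ℤ_[q] {ζ - 1} := by
  have hζ_int : IsIntegral ℤ_[q] (ζ - 1) :=
    (hζ.isIntegral (Fact.out : q.Prime).pos).tower_top.sub isIntegral_one
  have hgen : (hζ.subOnePowerBasis ℚ_[q]).gen = ζ - 1 := hζ.subOnePowerBasis_gen ℚ_[q]
  obtain ⟨b, hb, hbx⟩ := exists_ne_zero_smul_mem_adjoin_gen (R := ℤ_[q])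
    (hζ.subOnePowerBasis ℚ_[q]) x
  rw [PadicInt.unitCoeff_spec hb, mul_smul] at hbx
  have hpow : (q : ℤ_[q]) ^ b.valuation • x ∈
      Algebra.adjoin ℤ_[q] {(hζ.subOnePowerBasis ℚ_[q]).gen} :=
    (Subalgebra.mem_toSubmodule _).1
      ((Submodule.smul_mem_iff_of_isUnit _ (PadicInt.unitCoeff hb).isUnit).1 hbx)
  rw [← hgen]
  refine mem_adjoin_of_smul_prime_pow_smul_of_minpoly_isEisensteinAt PadicInt.prime_p
    (hgen ▸ hζ_int) hx hpow ?_
  rw [hgen, minpoly_sub_one_eq_cyclotomic_padicInt_comp hζ]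
  exact cyclotomic_padicInt_comp_X_add_one_isEisensteinAt

variable {θ : 𝒪 q L}

lemma adjoin_sub_one_eq_top (hθ : IsPrimitiveRoot (θ : L) q) :
    Algebra.adjoin ℤ_[q] {θ - 1} = ⊤ := by
  refine eq_top_iff.2 fun x _ => ?_
  have hx := mem_adjoin_sub_one_of_isIntegral hθ x.2
  rw [Algebra.adjoin_singleton_eq_range_aeval] at hx ⊢
  obtain ⟨P, hP⟩ := hx
  exact ⟨P, Subtype.ext ((Subalgebra.aeval_coe _ (θ - 1) P).symm.trans hP)⟩

lemma exists_sub_one_dvd_sub_algebraMap (hθ : IsPrimitiveRoot (θ : L) q) (x : 𝒪 q L) :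
    ∃ a : ℤ_[q], θ - 1 ∣ x - algebraMap ℤ_[q] (𝒪 q L) a := by
  have hx : x ∈ Algebra.adjoin ℤ_[q] {θ - 1} := adjoin_sub_one_eq_top hθ ▸ Algebra.mem_top
  rw [Algebra.adjoin_singleton_eq_range_aeval] at hx
  obtain ⟨P, rfl⟩ := hx
  refine ⟨P.coeff 0, ?_⟩
  simpa using map_dvd (aeval (θ - 1)) (X_dvd_sub_C (p := P))

lemma span_range_addChar_eq_top {ε : AddChar (ZMod q) (𝒪 q L)}
    (hε : IsPrimitiveRoot (ε 1 : L) q) : Submodule.span ℤ_[q] (Set.range ε) = ⊤ := by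
  have hle : Algebra.adjoin ℤ_[q] {ε 1 - 1} ≤ Algebra.adjoin ℤ_[q] {ε 1} :=
    Algebra.adjoin_le (Set.singleton_subset_iff.2
      (sub_mem (Algebra.self_mem_adjoin_singleton _ _) (one_mem _)))
  have htop : Algebra.adjoin ℤ_[q] {ε 1} = ⊤ := top_le_iff.1 (adjoin_sub_one_eq_top hε ▸ hle)
  rw [← top_le_iff, ← Algebra.top_toSubmodule, ← htop, Algebra.adjoin_eq_span]
  refine Submodule.span_mono fun y hy => ?_
  obtain ⟨n, rfl⟩ := Submonoid.mem_closure_singleton.1 hy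
  exact ⟨n, by rw [← AddChar.map_nsmul_eq_pow, nsmul_one]⟩

end Integers

section Norm

open Polynomial

lemma norm_sub_one_pos {F : Type*} [NormedField F] {ζ : F} {n : ℕ} (hn : 1 < n)
    (hζ : IsPrimitiveRoot ζ n) : 0 < ‖ζ - 1‖ :=
  norm_pos_iff.2 (sub_ne_zero.2 (hζ.ne_one hn))

lemma exists_addChar_apply_one_eq {M : Type*} [CommMonoid M] {n : ℕ} [NeZero n] {ζ : M}
    (hζ : ζ ^ n = 1) : ∃ ε : AddChar (ZMod n) M, ε 1 = ζ :=
  ⟨AddChar.zmodChar n hζ, by simpa using AddChar.zmodChar_apply' hζ 1⟩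

variable {q : ℕ} [Fact q.Prime] {L : Type} [NormedField L] [NormedAlgebra ℚ_[q] L]

lemma norm_le_one_iff_isIntegral [Algebra ℤ_[q] L] [IsScalarTower ℤ_[q] ℚ_[q] L]
    [Algebra.IsAlgebraic ℚ_[q] L] {x : L} : ‖x‖ ≤ 1 ↔ IsIntegral ℤ_[q] x := by
  have hmonic := minpoly.monic (Algebra.IsIntegral.isIntegral (R := ℚ_[q]) x)
  rw [NormedAlgebra.norm_eq_spectralNorm ℚ_[q], spectralNorm, spectralValue_le_one_iff hmonic]
  constructor
  · intro h
    have hlift : minpoly ℚ_[q] x ∈ lifts (algebraMap ℤ_[q] ℚ_[q]) := by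
      rw [lifts_iff_coeff_lifts]
      exact fun n => ⟨⟨_, h n⟩, rfl⟩
    obtain ⟨P, hP, -, hPm⟩ := lifts_and_natDegree_eq_and_monic hlift hmonic
    refine ⟨P, hPm, ?_⟩
    rw [← aeval_def, ← aeval_map_algebraMap ℚ_[q], hP, minpoly.aeval]
  · intro h n
    rw [minpoly.isIntegrallyClosed_eq_field_fractions' ℚ_[q] h, coeff_map]
    exact PadicInt.norm_le_one _

variable [IsCyclotomicExtension {q} ℚ_[q] L]

lemma norm_galConj {a : ZMod q} (ha : a ≠ 0) (x : L) :
    ‖galConj (cyclotomic_padic_irreducible (q := q)) a x‖ = ‖x‖ := by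
  have : FiniteDimensional ℚ_[q] L := IsCyclotomicExtension.finiteDimensional {q} ℚ_[q] L
  rw [galConj_apply _ ha, NormedAlgebra.norm_eq_spectralNorm ℚ_[q],
    NormedAlgebra.norm_eq_spectralNorm ℚ_[q]]
  exact (spectralNorm_eq_of_equiv _ x).symm

lemma norm_addChar_sub {ε : AddChar (ZMod q) L} (hε : IsPrimitiveRoot (ε 1) q) {a b : ZMod q}
    (hab : a ≠ b) : ‖ε a - ε b‖ = ‖ε 1 - 1‖ := by
  have hab' := sub_ne_zero.2 hab
  have hconj : ε b * galConj (cyclotomic_padic_irreducible (q := q)) (a - b) (ε 1 - 1) =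
      ε a - ε b := by
    rw [map_sub, galConj_addChar _ hε hab', galConj_apply _ hab', map_one, mul_one, mul_sub,
      ← AddChar.map_add_eq_mul, add_sub_cancel, mul_one]
  rw [← hconj, norm_mul, AddChar.norm_apply, one_mul, norm_galConj hab']

lemma norm_sub_one_pow {ζ : L} (hζ : IsPrimitiveRoot ζ q) : ‖ζ - 1‖ ^ (q - 1) = (q : ℝ)⁻¹ := by
  obtain ⟨ε, rfl⟩ := exists_addChar_apply_one_eq hζ.pow_eq_one
  obtain ⟨n, rfl⟩ : ∃ n, q = n + 1 := Nat.exists_eq_add_one.2 (Fact.out : q.Prime).pos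
  have hprod : ∏ k ∈ Finset.range n, (1 - ε 1 ^ (k + 1)) = ((n + 1 : ℕ) : L) := by
    exact_mod_cast hζ.prod_one_sub_pow_eq_order
  have hfactor : ∀ k ∈ Finset.range n, ‖1 - ε 1 ^ (k + 1)‖ = ‖ε 1 - 1‖ := by
    intro k hk
    have hne : (0 : ZMod (n + 1)) ≠ (k + 1 : ℕ) := fun h =>
      Nat.not_dvd_of_pos_of_lt k.succ_pos (Nat.succ_lt_succ (Finset.mem_range.1 hk))
        ((ZMod.natCast_eq_zero_iff _ _).1 h.symm)
    rw [← norm_addChar_sub hζ hne, AddChar.map_zero_eq_one, ← AddChar.map_nsmul_eq_pow, nsmul_one]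
  have hnorm : ‖((n + 1 : ℕ) : L)‖ = ((n + 1 : ℕ) : ℝ)⁻¹ := by
    rw [← map_natCast (algebraMap ℚ_[n + 1] L), norm_algebraMap', Padic.norm_p]
  rw [← hnorm, ← hprod, norm_prod, Finset.prod_congr rfl hfactor, Finset.prod_const,
    Finset.card_range, Nat.add_sub_cancel]

lemma norm_sub_one_lt_one {ζ : L} (hζ : IsPrimitiveRoot ζ q) : ‖ζ - 1‖ < 1 := by
  have hlt : ‖ζ - 1‖ ^ (q - 1) < 1 := by
    rw [norm_sub_one_pow hζ]
    exact inv_lt_one_of_one_lt₀ (Nat.one_lt_cast.2 (Fact.out : q.Prime).one_lt)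
  exact lt_of_pow_lt_pow_left₀ _ zero_le_one (by rwa [one_pow])

end Norm

section Fourier

variable {R F : Type*} [CommRing R] [Fintype R] [Field F] {ψ : AddChar R F} {G : R → F}

/-- The coefficient of `m ↦ ψ (t m)` in the expansion of `G` into additive characters of a finite
ring: the discrete Fourier transform with respect to a character with values in any field. -/
noncomputable def dftCoeff (ψ : AddChar R F) (G : R → F) (t : R) : F :=
  (Fintype.card R : F)⁻¹ * ∑ j, G j * ψ (-(j * t))

lemma sum_dftCoeff_mul (hψ : ψ.IsPrimitive) (hR : (Fintype.card R : F) ≠ 0) (m : R) :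
    ∑ t, dftCoeff ψ G t * ψ (t * m) = G m := by
  classical
  have hchar : ∀ j, ∑ t, G j * ψ (-(j * t)) * ψ (t * m) =
      if j = m then G j * Fintype.card R else 0 := by
    intro j
    have hcomb : ∀ t, G j * ψ (-(j * t)) * ψ (t * m) = G j * ψ (t * (m - j)) := fun t => by
      rw [mul_assoc, ← AddChar.map_add_eq_mul]
      ring_nf
    simp only [hcomb, ← Finset.mul_sum, AddChar.sum_mulShift _ hψ, sub_eq_zero, eq_comm (a := m)]
    split_ifs <;> simp
  have hterm : ∀ t, dftCoeff ψ G t * ψ (t * m) =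
      (Fintype.card R : F)⁻¹ * ∑ j, G j * ψ (-(j * t)) * ψ (t * m) := fun t => by
    rw [dftCoeff, mul_assoc, Finset.sum_mul]
  simp only [hterm, ← Finset.mul_sum]
  rw [Finset.sum_comm]
  simp only [hchar, Finset.sum_ite_eq', Finset.mem_univ, if_true]
  field_simp

lemma isSkew_dftCoeff (hsum : ∑ j, G j = 0) (hneg : ∀ j, G (-j) = -(ψ (-j) * G j)) :
    IsSkew (dftCoeff ψ G) where
  zero := by simp [dftCoeff, hsum]
  one_sub t := by
    rw [dftCoeff, dftCoeff, ← mul_neg, ← Finset.sum_neg_distrib, ← Equiv.sum_comp (Equiv.neg R)]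
    congr 1
    refine Finset.sum_congr rfl fun j _ => ?_
    have hinv : ψ (-j) * ψ j = 1 := by
      rw [← AddChar.map_add_eq_mul, neg_add_cancel, AddChar.map_zero_eq_one]
    rw [Equiv.neg_apply, hneg, show -(-j * (1 - t)) = j + -(j * t) by ring,
      AddChar.map_add_eq_mul]
    linear_combination (-(G j * ψ (-(j * t)))) * hinv

end Fourier

section Equivariant

lemma coe_apply_eq_twistedBracket {q : ℕ} [Fact q.Prime] {ι R F : Type*} [CommRing R] [CommRing F]
    [Algebra R F] {A : Subalgebra R F} {σ : ZMod q →*₀ (F →ₙ+* F)} {c : ZMod q → F}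
    (hσ : ∀ t (r : R) x, σ t (r • x) = r • σ t x) {γ : A →ₗ[R] A →ₗ[R] A} {e : ι → A}
    (he : Submodule.span R (Set.range e) = ⊤)
    (hγ : ∀ j k, (γ (e j) (e k) : F) = twistedBracket σ c (e j) (e k)) (x y : A) :
    (γ x y : F) = twistedBracket σ c x y := by
  have hspan : ∀ x, x ∈ Submodule.span R (Set.range e) := fun x => he ▸ Submodule.mem_top
  induction hspan x, hspan y using Submodule.span_induction₂ with
  | mem_mem x y hx hy =>
    obtain ⟨j, rfl⟩ := hx
    obtain ⟨k, rfl⟩ := hy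
    exact hγ j k
  | zero_left y => simp [twistedBracket]
  | zero_right x => simp [twistedBracket]
  | add_left x y z _ _ _ hx hy =>
    simp [twistedBracket, hx, hy, mul_add, add_mul, Finset.sum_add_distrib]
  | add_right x y z _ _ _ hy hz =>
    simp [twistedBracket, hy, hz, mul_add, Finset.sum_add_distrib]
  | smul_left r x y _ _ h => simp [twistedBracket, h, hσ, Finset.smul_sum]
  | smul_right r x y _ _ h => simp [twistedBracket, h, hσ, Finset.smul_sum]

lemma twistedBracket_galConj_addChar {q : ℕ} [Fact q.Prime] {k L : Type*} [Field k] [Field L]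
    [Algebra k L] [IsCyclotomicExtension {q} k L] (h : Irreducible (Polynomial.cyclotomic q k))
    {ε : AddChar (ZMod q) L} (hε : IsPrimitiveRoot (ε 1) q) {c : ZMod q → L} (hc : IsSkew c)
    (j k : ZMod q) :
    twistedBracket (galConj h) c (ε j) (ε k) = ε k * ∑ t, c t * ε (t * (j - k)) := by
  rw [twistedBracket, Finset.mul_sum]
  refine Finset.sum_congr rfl fun t _ => ?_
  rcases eq_or_ne t 0 with rfl | ht0
  · simp [hc.zero]
  rcases eq_or_ne t 1 with rfl | ht1
  · simp [hc.one]
  have hexp : ε (t * j) * ε ((1 - t) * k) = ε k * ε (t * (j - k)) := by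
    rw [← AddChar.map_add_eq_mul, ← AddChar.map_add_eq_mul]
    ring_nf
  rw [galConj_addChar h hε ht0, galConj_addChar h hε (sub_ne_zero.2 ht1.symm), mul_assoc, hexp]
  ring

variable {q : ℕ} [Fact q.Prime] {L : Type} [Field L] [Algebra ℤ_[q] L]
  {γ : 𝒪 q L →ₗ[ℤ_[q]] 𝒪 q L →ₗ[ℤ_[q]] 𝒪 q L} {ε : AddChar (ZMod q) (𝒪 q L)}

lemma IsPEquivariant.pow_mul {θ : 𝒪 q L} (hγ : IsPEquivariant q L θ γ) (n : ℕ) (x y : 𝒪 q L) :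
    γ (θ ^ n * x) (θ ^ n * y) = θ ^ n * γ x y := by
  induction n with
  | zero => simp
  | succ n ih => rw [pow_succ', mul_assoc, mul_assoc, hγ.2, ih, mul_assoc]

lemma IsPEquivariant.addChar_mul (hγ : IsPEquivariant q L (ε 1) γ) (k : ZMod q) (x y : 𝒪 q L) :
    γ (ε k * x) (ε k * y) = ε k * γ x y := by
  have hpow : ε k = ε 1 ^ k.val := by
    rw [← AddChar.map_nsmul_eq_pow, nsmul_one, ZMod.natCast_zmod_val]
  rw [hpow, hγ.pow_mul]

lemma IsPEquivariant.apply_addChar (hγ : IsPEquivariant q L (ε 1) γ) (j k : ZMod q) :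
    γ (ε j) (ε k) = ε k * γ (ε (j - k)) 1 := by
  rw [← hγ.addChar_mul, ← AddChar.map_add_eq_mul, add_sub_cancel, mul_one]

lemma IsPEquivariant.apply_addChar_neg (hγ : IsPEquivariant q L (ε 1) γ) (j : ZMod q) :
    γ (ε (-j)) 1 = -(ε (-j) * γ (ε j) 1) := by
  have halt : γ.IsAlt := hγ.1
  rw [← hγ.addChar_mul, ← AddChar.map_add_eq_mul, neg_add_cancel, AddChar.map_zero_eq_one, mul_one,
    halt.neg]

theorem IsPEquivariant.exists_eq_twistedBracket [Algebra ℚ_[q] L] [IsScalarTower ℤ_[q] ℚ_[q] L]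
    [IsCyclotomicExtension {q} ℚ_[q] L] (hε : IsPrimitiveRoot (ε 1 : L) q)
    (hγ : IsPEquivariant q L (ε 1) γ) :
    ∃ c : ZMod q → L, IsSkew c ∧ ∀ x y : 𝒪 q L,
      (γ x y : L) = twistedBracket (galConj cyclotomic_padic_irreducible) c x y := by
  have : CharZero L := charZero_of_injective_algebraMap (algebraMap ℚ_[q] L).injective
  have hcard : (Fintype.card (ZMod q) : L) ≠ 0 := Nat.cast_ne_zero.2 Fintype.card_ne_zero
  let ψ : AddChar (ZMod q) L := (algebraMap (𝒪 q L) L).toMonoidHom.compAddChar ε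
  have hψ : ψ ≠ 1 :=
    (AddChar.zmod_char_ne_one_iff q ψ).2 (hε.ne_one (Fact.out : q.Prime).one_lt)
  have hεsum : ∑ j, ε j = 0 := Subtype.ext (by
    rw [AddSubmonoidClass.coe_finsetSum]
    exact AddChar.sum_eq_zero_of_ne_one hψ)
  let G : ZMod q → L := fun j => algebraMap (𝒪 q L) L (γ (ε j) 1)
  have hskew : IsSkew (dftCoeff ψ G) := by
    refine isSkew_dftCoeff ?_ fun j => ?_
    · rw [← map_sum, ← LinearMap.sum_apply, ← map_sum, hεsum, map_zero, LinearMap.zero_apply,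
        map_zero]
    · simp only [G, hγ.apply_addChar_neg, map_neg, map_mul]
      rfl
  have hsmul : ∀ t (r : ℤ_[q]) (x : L), galConj (cyclotomic_padic_irreducible (q := q)) t (r • x) =
      r • galConj cyclotomic_padic_irreducible t x := fun t r x => by
    rw [← algebraMap_smul ℚ_[q] r, galConj_smul, algebraMap_smul]
  refine ⟨dftCoeff ψ G, hskew, coe_apply_eq_twistedBracket hsmul (span_range_addChar_eq_top hε)
    fun j k => ?_⟩
  rw [hγ.apply_addChar, MulMemClass.coe_mul]
  refine Eq.trans ?_ (twistedBracket_galConj_addChar cyclotomic_padic_irreducible (ε := ψ) hε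
    hskew j k).symm
  rw [sum_dftCoeff_mul (AddChar.IsPrimitive.of_ne_one hψ) hcard]
  rfl

end Equivariant

section Bounds

lemma norm_twistedBracket_le {q : ℕ} [Fact q.Prime] {F : Type*} [NormedField F]
    [IsUltrametricDist F] {σ : ZMod q →*₀ (F →ₙ+* F)} {c : ZMod q → F}
    (hσ : ∀ a ≠ 0, ∀ x, ‖σ a x‖ = ‖x‖) {M : ℝ} (hcM : ∀ t, ‖c t‖ ≤ M) (x y : F) :
    ‖twistedBracket σ c x y‖ ≤ M * ‖x‖ * ‖y‖ := by
  have hM : 0 ≤ M := (norm_nonneg _).trans (hcM 0)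
  have hσ_le : ∀ a x, ‖σ a x‖ ≤ ‖x‖ := fun a x => by
    rcases eq_or_ne a 0 with rfl | ha
    · simp
    · exact (hσ a ha x).le
  refine IsUltrametricDist.norm_sum_le_of_forall_le_of_nonneg (by positivity) fun t _ => ?_
  rw [norm_mul, norm_mul]
  gcongr
  exacts [hcM t, hσ_le t x, hσ_le _ y]

variable {q : ℕ} [Fact q.Prime] {L : Type}

section Ideals

variable [Field L] [Algebra ℤ_[q] L] {θ : 𝒪 q L} {γ : 𝒪 q L →ₗ[ℤ_[q]] 𝒪 q L →ₗ[ℤ_[q]] 𝒪 q L}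
  {i : ℕ}

lemma sub_one_pow_mem_pid_pow (k : ℕ) : (θ - 1) ^ k ∈ pid q L θ ^ k :=
  Ideal.pow_mem_pow (Ideal.mem_span_singleton_self _) k

lemma Jid_le_Wid : Jid q L θ γ i ≤ Wid q L θ γ i 3 := by
  have hW : ∀ x ∈ pid q L θ ^ i, ∀ y ∈ pid q L θ ^ i, ∀ z ∈ pid q L θ ^ i,
      γ (γ x y) z ∈ Wid q L θ γ i 3 := fun x hx y hy z hz =>
    Ideal.subset_span ⟨γ x y, Ideal.subset_span ⟨x, hx, y, hy, rfl⟩, z, hz, rfl⟩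
  refine Ideal.span_le.2 ?_
  rintro _ ⟨x, hx, y, hy, z, hz, rfl⟩
  exact add_mem (add_mem (hW x hx y hy z hz) (hW y hy z hz x hx)) (hW z hz x hx y hy)

lemma InHhat.Wid_two_le (hγi : InHhat q L θ i γ) :
    Wid q L θ γ i 2 ≤ pid q L θ ^ (2 * i + 1) := by
  refine Ideal.span_le.2 ?_
  rintro _ ⟨x, hx, y, hy, rfl⟩
  have hmem : γ x y ∈ (pid q L θ ^ (2 * i + 1)).restrictScalars ℤ :=
    hγi ▸ Submodule.subset_span ⟨x, hx, y, hy, rfl⟩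
  exact hmem

lemma exists_smul_add_of_mem_pid_pow [Algebra ℚ_[q] L] [IsScalarTower ℤ_[q] ℚ_[q] L]
    [IsCyclotomicExtension {q} ℚ_[q] L] (hθ : IsPrimitiveRoot (θ : L) q) {x : 𝒪 q L}
    (hx : x ∈ pid q L θ ^ i) :
    ∃ a : ℤ_[q], ∃ x' ∈ pid q L θ ^ (i + 1), x = a • (θ - 1) ^ i + x' := by
  rw [pid, Ideal.span_singleton_pow, Ideal.mem_span_singleton] at hx
  obtain ⟨u, rfl⟩ := hx
  obtain ⟨a, v, hv⟩ := exists_sub_one_dvd_sub_algebraMap hθ u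
  refine ⟨a, (θ - 1) ^ (i + 1) * v, Ideal.mul_mem_right _ _ (sub_one_pow_mem_pid_pow _), ?_⟩
  rw [Algebra.smul_def]
  linear_combination (θ - 1) ^ i * hv

end Ideals

variable [NormedField L] [NormedAlgebra ℚ_[q] L] [Algebra ℤ_[q] L] [IsScalarTower ℤ_[q] ℚ_[q] L]
  {θ : 𝒪 q L} {γ : 𝒪 q L →ₗ[ℤ_[q]] 𝒪 q L →ₗ[ℤ_[q]] 𝒪 q L} {i : ℕ}

section Algebraic

variable [Algebra.IsAlgebraic ℚ_[q] L]

lemma mem_pid_pow_iff (hθ : θ ≠ 1) {k : ℕ} {x : 𝒪 q L} :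
    x ∈ pid q L θ ^ k ↔ ‖(x : L)‖ ≤ ‖(θ - 1 : L)‖ ^ k := by
  have hκ : (θ - 1 : L) ≠ 0 := sub_ne_zero.2 fun h => hθ (Subtype.ext h)
  rw [pid, Ideal.span_singleton_pow, Ideal.mem_span_singleton]
  constructor
  · rintro ⟨y, rfl⟩
    rw [MulMemClass.coe_mul, SubmonoidClass.coe_pow, norm_mul, norm_pow]
    exact mul_le_of_le_one_right (by positivity) (norm_le_one_iff_isIntegral.2 y.2)
  · intro h
    refine ⟨⟨(θ - 1 : L)⁻¹ ^ k * x, norm_le_one_iff_isIntegral.1 ?_⟩, Subtype.ext ?_⟩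
    · rw [norm_mul, norm_pow, norm_inv, inv_pow]
      exact inv_mul_le_one_of_le₀ h (by positivity)
    · change (x : L) = (θ - 1 : L) ^ k * ((θ - 1 : L)⁻¹ ^ k * x)
      rw [← mul_assoc, ← mul_pow, mul_inv_cancel₀ hκ, one_pow, one_mul]

lemma norm_le_of_mem_span [IsUltrametricDist L] {S : Set (𝒪 q L)} {r : ℝ} (hr : 0 ≤ r)
    (hS : ∀ x ∈ S, ‖(x : L)‖ ≤ r) {v : 𝒪 q L} (hv : v ∈ Ideal.span S) : ‖(v : L)‖ ≤ r := by
  induction hv using Submodule.span_induction with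
  | mem x hx => exact hS x hx
  | zero => simpa using hr
  | add x y _ _ hx hy => exact (IsUltrametricDist.norm_add_le_max _ _).trans (max_le hx hy)
  | smul a x _ hx =>
    rw [smul_eq_mul, MulMemClass.coe_mul, norm_mul]
    exact (mul_le_of_le_one_left (norm_nonneg _) (norm_le_one_iff_isIntegral.2 a.2)).trans hx

lemma norm_bracket_le_pow_add (hθ : θ ≠ 1) {M : ℝ}
    (hγM : ∀ x y, ‖(γ x y : L)‖ ≤ M * ‖(x : L)‖ * ‖(y : L)‖) {m n : ℕ} {x y : 𝒪 q L}
    (hx : x ∈ pid q L θ ^ m) (hy : y ∈ pid q L θ ^ n) :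
    ‖(γ x y : L)‖ ≤ M * ‖(θ - 1 : L)‖ ^ (m + n) := by
  have hM : 0 ≤ M := by simpa using (norm_nonneg _).trans (hγM 1 1)
  rw [mem_pid_pow_iff hθ] at hx hy
  rw [pow_add, ← mul_assoc]
  exact (hγM x y).trans (by gcongr)

lemma InHhat.norm_le_of_mem_Wid [IsUltrametricDist L] (hγi : InHhat q L θ i γ) (hθ : θ ≠ 1)
    {M : ℝ} (hγM : ∀ x y, ‖(γ x y : L)‖ ≤ M * ‖(x : L)‖ * ‖(y : L)‖) {v : 𝒪 q L}
    (hv : v ∈ Wid q L θ γ i 3) : ‖(v : L)‖ ≤ M * ‖(θ - 1 : L)‖ ^ (3 * i + 1) := by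
  have hM : 0 ≤ M := by simpa using (norm_nonneg _).trans (hγM 1 1)
  refine norm_le_of_mem_span (by positivity) ?_ hv
  rintro _ ⟨x, hx, y, hy, rfl⟩
  rw [show 3 * i + 1 = 2 * i + 1 + i by ring]
  exact norm_bracket_le_pow_add hθ hγM (hγi.Wid_two_le hx) hy

end Algebraic

variable [IsCyclotomicExtension {q} ℚ_[q] L] [IsUltrametricDist L] {M : ℝ}

-- The residue field of `𝒪` is `𝔽_q`, so `𝔭^i / 𝔭^(i+1)` is cyclic and an alternating form
-- on `𝔭^i` vanishes to one order more than bilinearity predicts.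
lemma norm_bracket_le_of_mem (hθ : IsPrimitiveRoot (θ : L) q) (hγ : γ.IsAlt)
    (hγM : ∀ x y, ‖(γ x y : L)‖ ≤ M * ‖(x : L)‖ * ‖(y : L)‖) {x y : 𝒪 q L}
    (hx : x ∈ pid q L θ ^ i) (hy : y ∈ pid q L θ ^ i) :
    ‖(γ x y : L)‖ ≤ M * ‖(θ - 1 : L)‖ ^ (2 * i + 1) := by
  have : FiniteDimensional ℚ_[q] L := IsCyclotomicExtension.finiteDimensional {q} ℚ_[q] L
  have hθ1 : θ ≠ 1 :=
    (IsPrimitiveRoot.coe_submonoidClass_iff.1 hθ).ne_one (Fact.out : q.Prime).one_lt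
  obtain ⟨a, x', hx', rfl⟩ := exists_smul_add_of_mem_pid_pow hθ hx
  obtain ⟨b, y', hy', rfl⟩ := exists_smul_add_of_mem_pid_pow hθ hy
  have hexpand : γ (a • (θ - 1) ^ i + x') (b • (θ - 1) ^ i + y') =
      γ (a • (θ - 1) ^ i) y' + γ x' (b • (θ - 1) ^ i + y') := by
    simp [hγ.self_eq_zero]
  have hai : a • (θ - 1) ^ i ∈ pid q L θ ^ i :=
    Submodule.smul_of_tower_mem _ a (sub_one_pow_mem_pid_pow i)
  rw [hexpand]
  refine (IsUltrametricDist.norm_add_le_max _ _).trans (max_le ?_ ?_)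
  · rw [show 2 * i + 1 = i + (i + 1) by ring]
    exact norm_bracket_le_pow_add hθ1 hγM hai hy'
  · rw [show 2 * i + 1 = i + 1 + i by ring]
    exact norm_bracket_le_pow_add hθ1 hγM hx' hy

lemma InHhat.one_le_of_norm_bracket_le (hγi : InHhat q L θ i γ) (hθ : IsPrimitiveRoot (θ : L) q)
    (hγ : γ.IsAlt) (hγM : ∀ x y, ‖(γ x y : L)‖ ≤ M * ‖(x : L)‖ * ‖(y : L)‖) : 1 ≤ M := by
  have : FiniteDimensional ℚ_[q] L := IsCyclotomicExtension.finiteDimensional {q} ℚ_[q] L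
  have hM : 0 ≤ M := by simpa using (norm_nonneg _).trans (hγM 1 1)
  have hpos : 0 < ‖(θ - 1 : L)‖ := norm_sub_one_pos (Fact.out : q.Prime).one_lt hθ
  have hmem : (θ - 1) ^ (2 * i + 1) ∈ (pid q L θ ^ (2 * i + 1)).restrictScalars ℤ :=
    sub_one_pow_mem_pid_pow _
  rw [← hγi] at hmem
  have hle : ‖(((θ - 1) ^ (2 * i + 1) : 𝒪 q L) : L)‖ ≤ M * ‖(θ - 1 : L)‖ ^ (2 * i + 1) := by
    refine norm_le_of_mem_span (by positivity) ?_
      (Submodule.span_le_restrictScalars ℤ (𝒪 q L) _ hmem)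
    rintro _ ⟨x, hx, y, hy, rfl⟩
    exact norm_bracket_le_of_mem hθ hγ hγM hx hy
  rw [SubmonoidClass.coe_pow, norm_pow] at hle
  exact le_of_mul_le_mul_right (by simpa using hle) (pow_pos hpos (2 * i + 1))

end Bounds

section Exponents

variable {q : ℕ} [Fact q.Prime] {L : Type} [NormedField L] [NormedAlgebra ℚ_[q] L]
  [Algebra ℤ_[q] L] [IsScalarTower ℤ_[q] ℚ_[q] L] [IsCyclotomicExtension {q} ℚ_[q] L]
  {θ : 𝒪 q L} {γ : 𝒪 q L →ₗ[ℤ_[q]] 𝒪 q L →ₗ[ℤ_[q]] 𝒪 q L} {i w l : ℕ}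
  {ε : AddChar (ZMod q) (𝒪 q L)}

lemma pid_pow_le_pid_pow_iff (hθ : IsPrimitiveRoot (θ : L) q) {m n : ℕ} :
    pid q L θ ^ m ≤ pid q L θ ^ n ↔ n ≤ m := by
  have : FiniteDimensional ℚ_[q] L := IsCyclotomicExtension.finiteDimensional {q} ℚ_[q] L
  have hq : 1 < q := (Fact.out : q.Prime).one_lt
  refine ⟨fun h => ?_, Ideal.pow_le_pow_right⟩
  have hmem := (mem_pid_pow_iff ((IsPrimitiveRoot.coe_submonoidClass_iff.1 hθ).ne_one hq)).1
    (h (sub_one_pow_mem_pid_pow m))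
  rw [SubmonoidClass.coe_pow, norm_pow] at hmem
  exact (pow_le_pow_iff_right_of_lt_one₀ (norm_sub_one_pos hq hθ) (norm_sub_one_lt_one hθ)).1 hmem

variable [IsUltrametricDist L]

theorem sq_norm_mul_pow_le_of_Jid_le (hq : 5 ≤ q) (hε : IsPrimitiveRoot (ε 1 : L) q)
    {c : ZMod q → L} (hc : IsSkew c) (hγc : ∀ x y : 𝒪 q L,
      (γ x y : L) = twistedBracket (galConj cyclotomic_padic_irreducible) c x y)
    {t₀ : ZMod q} (hct : c t₀ ≠ 0) (hmax : ∀ t, ‖c t‖ ≤ ‖c t₀‖)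
    (hJ : Jid q L (ε 1) γ i ≤ pid q L (ε 1) ^ l) :
    ‖c t₀‖ ^ 2 * ‖(ε 1 - 1 : L)‖ ^ (2 * q - 7 + 3 * i) ≤ ‖(ε 1 - 1 : L)‖ ^ l := by
  have : FiniteDimensional ℚ_[q] L := IsCyclotomicExtension.finiteDimensional {q} ℚ_[q] L
  have : CharZero L := charZero_of_injective_algebraMap (algebraMap ℚ_[q] L).injective
  have hε1 : ε 1 ≠ 1 :=
    (IsPrimitiveRoot.coe_submonoidClass_iff.1 hε).ne_one (Fact.out : q.Prime).one_lt
  let ψ : AddChar (ZMod q) L := (algebraMap (𝒪 q L) L).toMonoidHom.compAddChar ε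
  have hψ : IsPrimitiveRoot (ψ 1) q := hε
  have hκ : (((ε 1 - 1) ^ i : 𝒪 q L) : L) ∈
      Subtype.val '' ((pid q L (ε 1) ^ i : Ideal (𝒪 q L)) : Set (𝒪 q L)) :=
    ⟨_, sub_one_pow_mem_pid_pow i, rfl⟩
  have key := hc.sq_norm_mul_pow_le hq (ζ := ψ 1) (χ := ψ) (B := ‖(ε 1 - 1 : L)‖ ^ l)
    (fun a ha x => norm_galConj ha x)
    (fun a x => by rw [galConj_addChar_mul _ hψ, mul_one]) (fun a => (ψ.norm_apply a).le)
    (fun a b hab => norm_addChar_sub hψ hab) ?_ ?_ hct hmax hκ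
  · rw [SubmonoidClass.coe_pow, norm_pow, mul_assoc, ← pow_mul, mul_comm i] at key
    rwa [pow_add]
  · rintro _ ⟨x, hx, rfl⟩
    exact ⟨ε 1 * x, Ideal.mul_mem_left _ _ hx, rfl⟩
  · rintro _ ⟨x, hx, rfl⟩ _ ⟨y, hy, rfl⟩ _ ⟨z, hz, rfl⟩
    simp only [jacobiator, ← hγc]
    exact (mem_pid_pow_iff hε1).1 (hJ (Ideal.subset_span ⟨x, hx, y, hy, z, hz, rfl⟩))

theorem InHhat.le_of_pid_pow_le_Wid_of_Jid_le_pid_pow (hq : 5 ≤ q) (hγi : InHhat q L (ε 1) i γ)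
    (hγ : IsPEquivariant q L (ε 1) γ) (hε : IsPrimitiveRoot (ε 1 : L) q)
    (hW : pid q L (ε 1) ^ w ≤ Wid q L (ε 1) γ i 3)
    (hJ : Jid q L (ε 1) γ i ≤ pid q L (ε 1) ^ l) : l ≤ w + 2 * q - 8 := by
  have : FiniteDimensional ℚ_[q] L := IsCyclotomicExtension.finiteDimensional {q} ℚ_[q] L
  have hε1 : ε 1 ≠ 1 :=
    (IsPrimitiveRoot.coe_submonoidClass_iff.1 hε).ne_one (Fact.out : q.Prime).one_lt
  obtain ⟨c, hc, hγc⟩ := hγ.exists_eq_twistedBracket hε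
  obtain ⟨t₀, hmax⟩ := Finite.exists_max fun t => ‖c t‖
  have hγM : ∀ x y : 𝒪 q L, ‖(γ x y : L)‖ ≤ ‖c t₀‖ * ‖(x : L)‖ * ‖(y : L)‖ := fun x y =>
    hγc x y ▸ norm_twistedBracket_le (fun a ha x => norm_galConj ha x) hmax x y
  have hM : 1 ≤ ‖c t₀‖ := hγi.one_le_of_norm_bracket_le hε hγ.1 hγM
  have hWle := hγi.norm_le_of_mem_Wid hε1 hγM (hW (sub_one_pow_mem_pid_pow w))
  have hJle := sq_norm_mul_pow_le_of_Jid_le hq hε hc hγc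
    (norm_pos_iff.1 (one_pos.trans_le hM)) hmax hJ
  rw [SubmonoidClass.coe_pow, norm_pow] at hWle
  refine (pow_le_pow_iff_right_of_lt_one₀ (norm_sub_one_pos (Fact.out : q.Prime).one_lt hε)
    (norm_sub_one_lt_one hε)).1 ?_
  set ρ := ‖(ε 1 - 1 : L)‖
  calc ρ ^ (w + 2 * q - 8) = ρ ^ w * ρ ^ (2 * q - 8) := by
        rw [← pow_add, Nat.add_sub_assoc (by lia)]
    _ ≤ ‖c t₀‖ * ρ ^ (3 * i + 1) * ρ ^ (2 * q - 8) := by gcongr; exact hWle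
    _ = ‖c t₀‖ * ρ ^ (2 * q - 7 + 3 * i) := by
        rw [mul_assoc, ← pow_add]
        congr 2
        lia
    _ ≤ ‖c t₀‖ ^ 2 * ρ ^ (2 * q - 7 + 3 * i) := by
        gcongr
        exact le_self_pow₀ hM two_ne_zero
    _ ≤ ρ ^ l := hJle

end Exponents

/-- For `γ ∈ Ĥ_i` with `J_i(γ) ≠ 0`, writing `W_3(i) = 𝔭^w` and
`J_i(γ) = 𝔭^λ`, one has `w ≤ λ ≤ w + 2p − 8`; in particular
`𝔭^{w+2p−8} ⊆ J_i(γ) ⊆ W_3(i)`. -/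
theorem frame_J_between_W3 (hp : 5 ≤ p) (hθ : IsPrimitiveRoot (θ : K) p)
    (hgen : Algebra.adjoin ℚ_[p] {(θ : K)} = ⊤)
    (hγ : IsPEquivariant p K θ γ)
    (i : ℕ) (hγi : InHhat p K θ i γ) (hJ : Jid p K θ γ i ≠ ⊥)
    (w l : ℕ) (hw : Wid p K θ γ i 3 = pid p K θ ^ w)
    (hl : Jid p K θ γ i = pid p K θ ^ l) :
    w ≤ l ∧ l ≤ w + 2 * p - 8 ∧
      pid p K θ ^ (w + 2 * p - 8) ≤ Jid p K θ γ i ∧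
      Jid p K θ γ i ≤ Wid p K θ γ i 3 := by
  have := isCyclotomicExtension_of_adjoin_eq_top hθ hgen
  have : FiniteDimensional ℚ_[p] K := IsCyclotomicExtension.finiteDimensional {p} ℚ_[p] K
  let := spectralNorm.normedField ℚ_[p] K
  let := spectralNorm.normedAlgebra ℚ_[p] K
  have : IsUltrametricDist K := IsUltrametricDist.of_normedAlgebra ℚ_[p]
  obtain ⟨ε, rfl⟩ := exists_addChar_apply_one_eq
    (IsPrimitiveRoot.coe_submonoidClass_iff.1 hθ).pow_eq_one
  have hJW : Jid p K (ε 1) γ i ≤ Wid p K (ε 1) γ i 3 := Jid_le_Wid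
  have hwl : w ≤ l := (pid_pow_le_pid_pow_iff hθ).1 (hl ▸ hw ▸ hJW)
  have hlw : l ≤ w + 2 * p - 8 :=
    hγi.le_of_pid_pow_le_Wid_of_Jid_le_pid_pow hp hγ hθ hw.ge hl.le
  exact ⟨hwl, hlw, hl ▸ Ideal.pow_le_pow_right hlw, hJW⟩

end MaximalClassFrame
end
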